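/- (Proposition 6) Let δ be a rectifiable Jordan curve and U the Jordan domain bounded by δ. Let f : δ* → ℂ be a continuous function such that ∫_δ P(z) f(z) dz = 0 for every analytic polynomial P. Then there exists a holomorphic function φ on U such that for almost every ζ ∈ δ* with respect to the arclength measure on δ*, φ has nontangential limit f(ζ) at ζ. -/

import Mathlib

open Set Filter Topology Polynomial MeasureTheory

/-- `I` is the Riemann–Stieltjes integral `∫_a^b g (δ t) dδ(t)`: for every `ε > 0` there is a
mesh size `d > 0` such that every Riemann–Stieltjes sum over a tagged partition of `[a, b]` of
mesh `< d` is `ε`-close to `I`. -/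
def IsRSIntegral (g : ℂ → ℂ) (δ : ℝ → ℂ) (a b : ℝ) (I : ℂ) : Prop :=
  ∀ ε > (0 : ℝ), ∃ d > (0 : ℝ), ∀ (n : ℕ) (t : Fin (n + 1) → ℝ) (ξ : Fin n → ℝ),
    Monotone t → t 0 = a → t (Fin.last n) = b →
    (∀ i : Fin n, ξ i ∈ Set.Icc (t i.castSucc) (t i.succ)) →
    (∀ i : Fin n, t i.succ - t i.castSucc < d) →
    ‖(∑ i : Fin n, g (δ (ξ i)) * (δ (t i.succ) - δ (t i.castSucc))) - I‖ < ε

/-- `δ : [a, b] → ℂ` is a rectifiable Jordan curve: continuous, of bounded variation,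
closed (`δ a = δ b`) and injective on `[a, b)`. -/
def IsRectifiableJordanCurve (δ : ℝ → ℂ) (a b : ℝ) : Prop :=
  a < b ∧ ContinuousOn δ (Set.Icc a b) ∧ BoundedVariationOn δ (Set.Icc a b) ∧
    δ a = δ b ∧ Set.InjOn δ (Set.Ico a b)

lemma lip_deriv_le {γ : ℝ → ℂ} (hγ : LipschitzWith 1 γ) (s : ℝ) : ‖deriv γ s‖ ≤ 1 := by
  simpa using norm_deriv_le_of_lipschitz (x₀ := s) hγ

lemma lip_mul_intervalIntegrable {γ : ℝ → ℂ} (hγ : LipschitzWith 1 γ) {g : ℝ → ℂ} {a b : ℝ}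
    (hg : ContinuousOn g (uIcc a b)) : IntervalIntegrable (fun s => g s * deriv γ s) volume a b := by
  have h := hg.intervalIntegrable (μ := volume)
  rw [intervalIntegrable_iff] at h ⊢
  refine h.mul_bdd (c := 1) ?_ ?_
  · exact (measurable_deriv γ).aestronglyMeasurable
  · exact Eventually.of_forall (fun s => lip_deriv_le hγ s)

lemma lip_deriv_intervalIntegrable {γ : ℝ → ℂ} (hγ : LipschitzWith 1 γ) (a b : ℝ) :
    IntervalIntegrable (deriv γ) volume a b := by
  simpa using lip_mul_intervalIntegrable hγ (g := fun _ => 1) (a := a) (b := b) continuousOn_const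

lemma lip_ftc {γ : ℝ → ℂ} (hγ : LipschitzWith 1 γ) (a b : ℝ) :
    ∫ s in a..b, deriv γ s = γ b - γ a := by
  have hi := lip_deriv_intervalIntegrable hγ
  let g (x : ℝ) := γ x - ∫ t in a..x, deriv γ t
  have h2 : LipschitzWith 2 g := by
    rw [show (2 : NNReal) = 1 + 1 by norm_num]
    refine hγ.sub ?_
    refine LipschitzWith.of_dist_le_mul (fun x y => ?_)
    rw [dist_eq_norm, intervalIntegral.integral_interval_sub_left (hi _ _) (hi _ _)]
    refine (intervalIntegral.norm_integral_le_of_norm_le_const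
      (fun s _ => lip_deriv_le hγ s)).trans ?_
    simp [Real.dist_eq]
  have g_ac : AbsolutelyContinuousOnInterval g a b :=
    (h2.lipschitzOnWith (s := uIcc a b)).absolutelyContinuousOnInterval
  have g_ae : ∀ᵐ x, x ∈ uIcc a b → HasDerivAt g 0 x := by
    filter_upwards [hγ.ae_differentiableAt_real, (hi a b).ae_hasDerivAt_integral]
      with x hx₁ hx₂ hx₃
    convert! (hx₁).hasDerivAt.sub (hx₂ hx₃ a (by simp))
    abel
  obtain ⟨C, hC⟩ := g_ac.const_of_ae_hasDerivAt_zero g_ae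
  have h1 : γ a = g a := by simp [g]
  have := hC a (by simp)
  have := hC b (by simp)
  have h3 : g b = γ b - ∫ t in a..b, deriv γ t := rfl
  grind

lemma lip_chain_ftc {γ : ℝ → ℂ} (hγ : LipschitzWith 1 γ) {p q : ℝ} (hpq : p ≤ q) (F F' : ℂ → ℂ)
    (hF : ∀ x ∈ Icc p q, HasDerivAt F (F' (γ x)) (γ x))
    (hF' : ContinuousOn (fun x => F' (γ x)) (Icc p q)) :
    ∫ s in p..q, F' (γ s) * deriv γ s = F (γ q) - F (γ p) := by
  rcases hpq.eq_or_lt with rfl | hlt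
  · simp
  have hint : ∀ x ∈ Icc p q, ∀ y ∈ Icc p q,
      IntervalIntegrable (fun s => F' (γ s) * deriv γ s) volume x y := fun x hx y hy =>
    lip_mul_intervalIntegrable hγ (hF'.mono (uIcc_subset_Icc hx hy))
  have hp : p ∈ Icc p q := left_mem_Icc.2 hpq
  have hq : q ∈ Icc p q := right_mem_Icc.2 hpq
  let ψ : ℝ → ℂ := fun x => F (γ x) - ∫ s in p..x, F' (γ s) * deriv γ s
  have key : ∀ x ∈ Icc p q, HasDerivWithinAt ψ 0 (Icc p q) x := by
    intro x hx
    rw [hasDerivWithinAt_iff_isLittleO]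
    have h1 : (fun y => F (γ y) - F (γ x) - (γ y - γ x) * F' (γ x)) =o[𝓝[Icc p q] x]
        fun y => y - x := by
      have h := (hF x hx).isLittleO
      have hc : Tendsto γ (𝓝[Icc p q] x) (𝓝 (γ x)) :=
        (hγ.continuous.continuousAt).mono_left nhdsWithin_le_nhds
      have h2 := h.comp_tendsto hc
      simp only [Function.comp_def, smul_eq_mul] at h2
      refine (Asymptotics.IsLittleO.congr_left h2 ?_).trans_isBigO ?_
      · intro y; simp
      · refine Asymptotics.IsBigO.of_bound 1 (Eventually.of_forall fun y => ?_)
        have := hγ.dist_le_mul y x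
        simpa [dist_eq_norm] using this
    have h2 : (fun y => (∫ s in x..y, F' (γ s) * deriv γ s) - (γ y - γ x) * F' (γ x))
        =o[𝓝[Icc p q] x] fun y => y - x := by
      rw [Asymptotics.isLittleO_iff]
      intro c hc
      have hcont := hF' x hx
      rw [Metric.continuousWithinAt_iff] at hcont
      obtain ⟨d, hd, hcd⟩ := hcont c hc
      filter_upwards [inter_mem_nhdsWithin (Icc p q) (Metric.ball_mem_nhds x hd)] with y hy
      rw [← lip_ftc hγ x y, ← intervalIntegral.integral_mul_const,
        ← intervalIntegral.integral_sub (hint x hx y hy.1)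
          ((lip_deriv_intervalIntegrable hγ x y).mul_const _)]
      rw [Real.norm_eq_abs]
      refine intervalIntegral.norm_integral_le_of_norm_le_const (fun s hs => ?_)
      have hs1 : s ∈ uIcc x y := uIoc_subset_uIcc hs
      have hs2 : s ∈ Icc p q := uIcc_subset_Icc hx hy.1 hs1
      have hs3 : dist s x < d := by
        have hyx : dist y x < d := hy.2
        rw [Real.dist_eq] at hyx ⊢
        exact lt_of_le_of_lt (abs_sub_left_of_mem_uIcc hs1) hyx
      have h3 := hcd hs2 hs3
      rw [dist_eq_norm] at h3
      rw [show F' (γ s) * deriv γ s - deriv γ s * F' (γ x) = (F' (γ s) - F' (γ x)) * deriv γ s by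
        ring, norm_mul]
      calc _ ≤ c * 1 := mul_le_mul h3.le (lip_deriv_le hγ s) (norm_nonneg _) hc.le
        _ = c := mul_one c
    have h3 := h1.sub h2
    refine h3.congr' ?_ EventuallyEq.rfl
    filter_upwards [self_mem_nhdsWithin] with y hy
    have h4 := intervalIntegral.integral_interval_sub_left (hint p hp y hy) (hint p hp x hx)
    simp only [ψ, smul_zero, sub_zero]
    rw [← h4]; ring
  have hconst := (convex_Icc p q).is_const_of_fderivWithin_eq_zero (𝕜 := ℝ) (f := ψ)
    (fun x hx => (key x hx).differentiableWithinAt) (fun x hx => by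
      rw [((key x hx).hasFDerivWithinAt).fderivWithin (uniqueDiffOn_Icc hlt x hx)]
      ext; simp) hp hq
  simp only [ψ, intervalIntegral.integral_same, sub_zero] at hconst
  rw [hconst]; ring

lemma continuousOn_variation {δ : ℝ → ℂ} {a b : ℝ} (hab : a ≤ b) (hc : ContinuousOn δ (Icc a b))
    (hbv : BoundedVariationOn δ (Icc a b)) :
    ContinuousOn (variationOnFromTo δ (Icc a b) a) (Icc a b) := by
  intro x hx
  have ha : a ∈ Icc a b := left_mem_Icc.2 hab
  have hl := hbv.locallyBoundedVariationOn
  have h1 := hbv.tendsto_eVariationOn_Icc_zero_left (x := x) ((hc x hx).mono inter_subset_left)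
  have h2 := hbv.tendsto_eVariationOn_Icc_zero_right x ((hc x hx).mono inter_subset_left)
  have h3 := (ENNReal.tendsto_toReal ENNReal.zero_ne_top).comp h1
  have h4 := (ENNReal.tendsto_toReal ENNReal.zero_ne_top).comp h2
  have h5 := h4.sub h3
  have h6 : Tendsto (variationOnFromTo δ (Icc a b) x) (𝓝[Icc a b] x) (𝓝 0) := by
    simp only [ENNReal.toReal_zero, sub_zero] at h5
    refine h5.congr' ?_
    filter_upwards [self_mem_nhdsWithin] with y hy
    simp only [Function.comp_apply]
    rcases le_total x y with h | h
    · rw [variationOnFromTo.eq_of_le _ _ h, eVariationOn.subsingleton (s := Icc a b ∩ Icc y x)]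
      · simp
      · rintro z ⟨_, hz1, hz2⟩ w ⟨_, hw1, hw2⟩
        linarith
    · rw [variationOnFromTo.eq_of_ge _ _ h, eVariationOn.subsingleton (s := Icc a b ∩ Icc x y)]
      · simp
      · rintro z ⟨_, hz1, hz2⟩ w ⟨_, hw1, hw2⟩
        linarith
  have h7 := h6.const_add (variationOnFromTo δ (Icc a b) a x)
  rw [add_zero] at h7
  refine h7.congr' ?_
  filter_upwards [self_mem_nhdsWithin] with y hy
  exact variationOnFromTo.add hl ha hx hy

lemma arclength_param {δ : ℝ → ℂ} {a b : ℝ} (hab : a < b) (hc : ContinuousOn δ (Icc a b))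
    (hbv : BoundedVariationOn δ (Icc a b)) (hcl : δ a = δ b) (hinj : InjOn δ (Ico a b)) :
    ∃ (L : ℝ) (γ : ℝ → ℂ) (v : ℝ → ℝ), 0 ≤ L ∧ LipschitzWith 1 γ ∧ ContinuousOn v (Icc a b) ∧
      MonotoneOn v (Icc a b) ∧ v a = 0 ∧ v b = L ∧ (∀ t ∈ Icc a b, γ (v t) = δ t) ∧
      γ 0 = γ L ∧ InjOn γ (Ico 0 L) ∧ γ '' Icc 0 L = δ '' Icc a b ∧
      ∀ᵐ s, s ∈ Icc 0 L → deriv γ s ≠ 0 := by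
  have ha : a ∈ Icc a b := left_mem_Icc.2 hab.le
  have hb : b ∈ Icc a b := right_mem_Icc.2 hab.le
  have hl := hbv.locallyBoundedVariationOn
  set v := variationOnFromTo δ (Icc a b) a with hv
  set L := v b with hL
  have hvc : ContinuousOn v (Icc a b) := continuousOn_variation hab.le hc hbv
  have hvm : MonotoneOn v (Icc a b) := variationOnFromTo.monotoneOn hl ha
  have hva : v a = 0 := variationOnFromTo.self ..
  have hL0 : 0 ≤ L := hva ▸ hvm ha hb hab.le
  have himg : v '' Icc a b = Icc 0 L := by
    apply Subset.antisymm
    · rintro _ ⟨t, ht, rfl⟩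
      exact ⟨hva ▸ hvm ha ht ht.1, hvm ht hb ht.2⟩
    · rw [← hva]
      exact intermediate_value_Icc hab.le hvc
  set γ0 := naturalParameterization δ (Icc a b) a with hγ0
  have hus : HasUnitSpeedOn γ0 (Icc 0 L) := himg ▸ has_unit_speed_naturalParameterization δ hl ha
  have hγv0 : ∀ t ∈ Icc a b, γ0 (v t) = δ t := fun t ht =>
    edist_eq_zero.1 (edist_naturalParameterization_eq_zero hl ha ht)
  have hlip0 : LipschitzOnWith 1 γ0 (Icc 0 L) := by
    have key : ∀ x ∈ Icc 0 L, ∀ y ∈ Icc 0 L, x ≤ y → edist (γ0 x) (γ0 y) ≤ edist x y := by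
      intro x hx y hy hxy
      have := hus hx hy
      have h2 := eVariationOn.edist_le γ0 (s := Icc 0 L ∩ Icc x y) ⟨hx, left_mem_Icc.2 hxy⟩
        ⟨hy, right_mem_Icc.2 hxy⟩
      rw [this] at h2
      refine h2.trans ?_
      rw [edist_dist, Real.dist_eq, abs_sub_comm, abs_of_nonneg (sub_nonneg.2 hxy)]
      simp
    intro x hx y hy
    rw [ENNReal.coe_one, one_mul]
    rcases le_total x y with h | h
    · exact key x hx y hy h
    · rw [edist_comm, edist_comm x]; exact key y hy x hx h
  let γ : ℝ → ℂ := IccExtend hL0 ((Icc 0 L).domRestrict γ0)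
  have hγeq : ∀ s ∈ Icc 0 L, γ s = γ0 s := fun s hs => IccExtend_of_mem hL0 _ hs
  have hlip : LipschitzWith 1 γ := by
    have := (hlip0.to_restrict).comp (LipschitzWith.projIcc hL0)
    rw [one_mul] at this
    exact this
  have hvmem : ∀ t ∈ Icc a b, v t ∈ Icc 0 L := fun t ht => himg ▸ mem_image_of_mem v ht
  have hγv : ∀ t ∈ Icc a b, γ (v t) = δ t := fun t ht => by
    rw [hγeq _ (hvmem t ht), hγv0 t ht]
  refine ⟨L, γ, v, hL0, hlip, hvc, hvm, hva, rfl, hγv, ?_, ?_, ?_, ?_⟩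
  · rw [← hva, hγv a ha, hL, hγv b hb, hcl]
  · intro x hx y hy hxy
    obtain ⟨t, ht, rfl⟩ : x ∈ v '' Icc a b := himg ▸ ⟨hx.1, hx.2.le⟩
    obtain ⟨r, hr, rfl⟩ : y ∈ v '' Icc a b := himg ▸ ⟨hy.1, hy.2.le⟩
    rw [hγv t ht, hγv r hr] at hxy
    have ht' : t < b := lt_of_le_of_ne ht.2 (fun h => by subst h; exact lt_irrefl _ hx.2)
    have hr' : r < b := lt_of_le_of_ne hr.2 (fun h => by subst h; exact lt_irrefl _ hy.2)
    rw [hinj ⟨ht.1, ht'⟩ ⟨hr.1, hr'⟩ hxy]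
  · rw [← himg, image_image]
    exact image_congr hγv
  · have hvar : eVariationOn γ (Icc 0 L) = ENNReal.ofReal L := by
      have := hus (left_mem_Icc.2 hL0) (right_mem_Icc.2 hL0)
      rw [inter_self] at this
      rw [eVariationOn.congr (g := γ0) hγeq, this]; simp
    have hni : IntervalIntegrable (fun s => ‖deriv γ s‖) volume 0 L :=
      (lip_deriv_intervalIntegrable hlip 0 L).norm
    have hle : eVariationOn γ (Icc 0 L) ≤ ENNReal.ofReal (∫ s in (0:ℝ)..L, ‖deriv γ s‖) := by
      refine iSup_le ?_
      rintro ⟨n, u, hu, hus⟩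
      have hii : ∀ x y, IntervalIntegrable (fun s => ‖deriv γ s‖) volume x y := fun x y =>
        (lip_deriv_intervalIntegrable hlip x y).norm
      calc ∑ i ∈ Finset.range n, edist (γ (u (i+1))) (γ (u i))
          ≤ ∑ i ∈ Finset.range n, ENNReal.ofReal (∫ s in (u i)..(u (i+1)), ‖deriv γ s‖) := by
            refine Finset.sum_le_sum fun i _ => ?_
            rw [edist_dist, dist_eq_norm, ← lip_ftc hlip]
            exact ENNReal.ofReal_le_ofReal
              (intervalIntegral.norm_integral_le_integral_norm (hu (Nat.le_succ i)))
        _ = ENNReal.ofReal (∑ i ∈ Finset.range n, ∫ s in (u i)..(u (i+1)), ‖deriv γ s‖) := by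
            rw [ENNReal.ofReal_sum_of_nonneg]
            exact fun i _ => intervalIntegral.integral_nonneg (hu (Nat.le_succ i))
              (fun _ _ => norm_nonneg _)
        _ = ENNReal.ofReal (∫ s in (u 0)..(u n), ‖deriv γ s‖) := by
            rw [intervalIntegral.sum_integral_adjacent_intervals (fun k _ => hii _ _)]
        _ ≤ _ := by
            refine ENNReal.ofReal_le_ofReal ?_
            refine intervalIntegral.integral_mono_interval (hus 0).1 (hu (Nat.zero_le n)) (hus n).2
              (Eventually.of_forall fun _ => norm_nonneg _) (hii _ _)
    rw [hvar, ENNReal.ofReal_le_ofReal_iff (intervalIntegral.integral_nonneg hL0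
      (fun _ _ => norm_nonneg _))] at hle
    have h0 : ∫ s in (0:ℝ)..L, (1 - ‖deriv γ s‖) = 0 := by
      apply le_antisymm
      · rw [intervalIntegral.integral_sub (by simp) hni]; simp; exact hle
      · exact intervalIntegral.integral_nonneg hL0 (fun s _ => sub_nonneg.2 (lip_deriv_le hlip s))
    rw [intervalIntegral.integral_eq_zero_iff_of_le_of_nonneg_ae hL0
      (Eventually.of_forall fun s => sub_nonneg.2 (lip_deriv_le hlip s)) (by
        exact (intervalIntegrable_const).sub hni)] at h0
    have h1 : ∀ᵐ s : ℝ, s ≠ 0 := by simp [ae_iff, measure_singleton]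
    filter_upwards [(ae_restrict_iff' measurableSet_Ioc).1 h0, h1] with s hs hs0 hsm hd
    have := hs ⟨lt_of_le_of_ne hsm.1 (Ne.symm hs0), hsm.2⟩
    simp [hd] at this

lemma rs_integral {δ γ : ℝ → ℂ} {v : ℝ → ℝ} {a b L : ℝ} (hab : a < b)
    (hc : ContinuousOn δ (Icc a b)) (hlip : LipschitzWith 1 γ)
    (hvc : ContinuousOn v (Icc a b)) (hvm : MonotoneOn v (Icc a b)) (hva : v a = 0) (hvb : v b = L)
    (hγv : ∀ t ∈ Icc a b, γ (v t) = δ t) (himg : γ '' Icc 0 L = δ '' Icc a b)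
    {g : ℂ → ℂ} (hg : ContinuousOn g (δ '' Icc a b)) {I : ℂ} (hI : IsRSIntegral g δ a b I) :
    ∫ s in (0:ℝ)..L, g (γ s) * deriv γ s = I := by
  have ha : a ∈ Icc a b := left_mem_Icc.2 hab.le
  have hb : b ∈ Icc a b := right_mem_Icc.2 hab.le
  have hL0 : 0 ≤ L := by rw [← hva, ← hvb]; exact hvm ha hb hab.le
  have hgγ : ContinuousOn (fun s => g (γ s)) (Icc 0 L) :=
    hg.comp hlip.continuous.continuousOn (fun s hs => himg ▸ mem_image_of_mem γ hs)
  have hgδ : ContinuousOn (fun s => g (δ s)) (Icc a b) :=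
    hg.comp hc (fun s hs => mem_image_of_mem δ hs)
  have huc := isCompact_Icc.uniformContinuousOn_of_continuous hgδ
  rw [Metric.uniformContinuousOn_iff] at huc
  have main : ∀ ε > 0, ‖(∫ s in (0:ℝ)..L, g (γ s) * deriv γ s) - I‖ ≤ ε * L + ε := by
    intro ε hε
    obtain ⟨d1, hd1, h1⟩ := huc ε hε
    obtain ⟨d, hd, h2⟩ := hI ε hε
    obtain ⟨n, hn⟩ := exists_nat_gt ((b - a) / min d d1)
    have hdm : 0 < min d d1 := lt_min hd hd1
    have hn0 : (0:ℝ) < n := lt_trans (div_pos (sub_pos.2 hab) hdm) hn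
    set h := (b - a) / n with hh
    have hpos : 0 < h := div_pos (sub_pos.2 hab) hn0
    have hlt : h < min d d1 := by
      rw [hh, div_lt_iff₀ hn0]
      rw [div_lt_iff₀ hdm] at hn
      linarith
    have hnh : n * h = b - a := by rw [hh]; field_simp
    let t : ℕ → ℝ := fun i => a + i * h
    have htm : Monotone t := by
      intro i j hij
      have : (i:ℝ) ≤ j := by exact_mod_cast hij
      simp only [t]
      nlinarith
    have htn : t n = b := by simp only [t]; rw [hnh]; ring
    have ht0 : t 0 = a := by simp [t]
    have hts : ∀ i, t (i+1) = t i + h := by intro i; simp only [t]; push_cast; ring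
    have htmem : ∀ i ≤ n, t i ∈ Icc a b := fun i hi =>
      ⟨ht0 ▸ htm (Nat.zero_le i), htn ▸ htm hi⟩
    have h3 := h2 n (fun i => t i) (fun i => t i) (fun i j hij => htm hij) (by simpa using ht0)
      (by simpa using htn) (fun i => by
        simp only [Fin.val_castSucc, Fin.val_succ]
        exact ⟨le_rfl, htm (Nat.le_succ _)⟩)
      (fun i => by
        simp only [Fin.val_castSucc, Fin.val_succ]
        rw [hts]; have := hlt.trans_le (min_le_left d d1); linarith)
    simp only [Fin.val_castSucc, Fin.val_succ] at h3
    rw [Fin.sum_univ_eq_sum_range (fun i => g (δ (t i)) * (δ (t (i+1)) - δ (t i))) n] at h3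
    have hvt : ∀ i ≤ n, v (t i) ∈ Icc 0 L := fun i hi =>
      ⟨hva ▸ hvm ha (htmem i hi) (htmem i hi).1, hvb ▸ hvm (htmem i hi) hb (htmem i hi).2⟩
    have hii : ∀ k < n, IntervalIntegrable (fun s => g (γ s) * deriv γ s) volume
        (v (t k)) (v (t (k+1))) := fun k hk =>
      lip_mul_intervalIntegrable hlip (hgγ.mono (uIcc_subset_Icc (hvt k hk.le) (hvt (k+1) hk)))
    have hsum := intervalIntegral.sum_integral_adjacent_intervals (a := fun i => v (t i)) hii
    simp only [ht0, htn, hva, hvb] at hsum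
    have hdiff : ‖(∫ s in (0:ℝ)..L, g (γ s) * deriv γ s)
        - ∑ i ∈ Finset.range n, g (δ (t i)) * (δ (t (i+1)) - δ (t i))‖ ≤ ε * L := by
      rw [← hsum, ← Finset.sum_sub_distrib]
      calc _ ≤ ∑ i ∈ Finset.range n, ε * (v (t (i+1)) - v (t i)) := by
            refine norm_sum_le_of_le _ (fun i hi => ?_)
            have hi' : i < n := Finset.mem_range.1 hi
            have hm1 := htmem i hi'.le
            have hm2 := htmem (i+1) hi'
            have hvle : v (t i) ≤ v (t (i+1)) := hvm hm1 hm2 (htm (Nat.le_succ i))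
            rw [← hγv _ hm1, ← hγv _ hm2, ← lip_ftc hlip,
              ← intervalIntegral.integral_const_mul,
              ← intervalIntegral.integral_sub (hii i hi')
              ((lip_deriv_intervalIntegrable hlip _ _).const_mul _)]
            rw [← abs_of_nonneg (sub_nonneg.2 hvle)]
            refine intervalIntegral.norm_integral_le_of_norm_le_const (fun s hs => ?_)
            rw [uIoc_of_le hvle] at hs
            obtain ⟨r, hr, rfl⟩ := intermediate_value_Icc (htm (Nat.le_succ i))
              (hvc.mono (Icc_subset_Icc hm1.1 hm2.2)) ⟨hs.1.le, hs.2⟩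
            have hr' : r ∈ Icc a b := ⟨hm1.1.trans hr.1, hr.2.trans hm2.2⟩
            rw [hγv _ hr', hγv _ hm1, ← sub_mul, norm_mul]
            have hd : dist r (t i) < d1 := by
              rw [Real.dist_eq, abs_of_nonneg (sub_nonneg.2 hr.1)]
              have h5 := hr.2
              have h6 := hlt.trans_le (min_le_right d d1)
              rw [Nat.succ_eq_add_one, hts] at h5
              linarith
            have h4 := h1 r hr' (t i) hm1 hd
            rw [dist_eq_norm] at h4
            calc _ ≤ ε * 1 := mul_le_mul h4.le (lip_deriv_le hlip _) (norm_nonneg _) hε.le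
              _ = ε := mul_one ε
        _ = ε * L := by
            rw [← Finset.mul_sum, Finset.sum_range_sub (fun i => v (t i)), htn, ht0, hva, hvb]
            ring
    calc _ ≤ _ + _ := norm_sub_le_norm_sub_add_norm_sub _
          (∑ i ∈ Finset.range n, g (δ (t i)) * (δ (t (i+1)) - δ (t i))) _
      _ ≤ _ := add_le_add hdiff h3.le
  rw [← sub_eq_zero, ← norm_eq_zero]
  refine le_antisymm (le_of_forall_pos_le_add fun ε hε => ?_) (norm_nonneg _)
  have h := main (ε / (L + 1)) (by positivity)
  have : ε / (L+1) * L + ε / (L+1) = ε := by field_simp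
  linarith

lemma exists_clog {X : Type*} [TopologicalSpace X] [SimplyConnectedSpace X]
    [LocallyPathConnectedSpace X] {g : X → ℂ} (hg : Continuous g) (h0 : ∀ x, g x ≠ 0) :
    ∃ Λ : X → ℂ, Continuous Λ ∧ ∀ x, Complex.exp (Λ x) = g x := by
  obtain ⟨x₀⟩ : Nonempty X := inferInstance
  obtain ⟨F, ⟨-, hF⟩, -⟩ := Complex.isCoveringMapOn_exp.existsUnique_continuousMap_lifts
    ⟨g, hg⟩ (a₀ := x₀) (Complex.exp_log (h0 x₀)) (fun x => h0 x)
  exact ⟨F, F.continuous, fun x => congrFun hF x⟩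

lemma clog_unique {X : Type*} [TopologicalSpace X] {S : Set X} (hS : IsPreconnected S)
    {Λ₁ Λ₂ : X → ℂ} (h1 : ContinuousOn Λ₁ S) (h2 : ContinuousOn Λ₂ S) (c : ℂ)
    (h : ∀ x ∈ S, Complex.exp (Λ₁ x) = c * Complex.exp (Λ₂ x)) {x y : X} (hx : x ∈ S)
    (hy : y ∈ S) : Λ₁ x - Λ₂ x = Λ₁ y - Λ₂ y := by
  have hp := hS.image (fun x => Λ₁ x - Λ₂ x) (h1.sub h2)
  have he : ∀ x ∈ S, Complex.exp (Λ₁ x - Λ₂ x) = c := fun x hx => by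
    rw [Complex.exp_sub, h x hx, mul_div_assoc, div_self (Complex.exp_ne_zero _), mul_one]
  have hcount : (range fun n : ℤ => (Λ₁ y - Λ₂ y) + n * (2 * Real.pi * Complex.I)).Countable :=
    countable_range _
  refine hcount.isTotallyDisconnected _ ?_ hp (mem_image_of_mem _ hx) (mem_image_of_mem _ hy)
  rintro _ ⟨z, hz, rfl⟩
  obtain ⟨n, hn⟩ := Complex.exp_eq_exp_iff_exists_int.1 ((he z hz).trans (he y hy).symm)
  exact ⟨n, hn.symm⟩

lemma degree_zero {J W : Set ℂ} (hJ : IsClosed J) (hWo : IsOpen W) (hWb : Bornology.IsBounded W)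
    (hWJ : frontier W ⊆ J) {z₁ z₂ : ℂ} (hz₁ : z₁ ∈ W) (hz₁J : z₁ ∉ J) (hz₂ : z₂ ∉ W) (hz₂J : z₂ ∉ J) (p q : ℤ)
    {h : ℂ → ℂ} (hh : ContinuousOn h J)
    (hexp : ∀ z ∈ J, Complex.exp (h z) = (z - z₁) ^ p * (z - z₂) ^ q) : p = 0 := by
  classical
  obtain ⟨H, hH⟩ := ContinuousMap.exists_restrict_eq hJ
    (⟨J.domRestrict h, hh.domRestrict⟩ : C(J, ℂ))
  have hHJ : ∀ z ∈ J, H z = h z := fun z hz =>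
    congrArg (fun k : C(J, ℂ) => k ⟨z, hz⟩) hH
  let e : ℂ → ℂ := fun ξ => z₂ + Complex.exp ξ
  have hec : Continuous e := by fun_prop
  let F : ℂ → ℂ := fun z => (z - z₁) ^ p * (z - z₂) ^ q
  let G : ℂ → ℂ := fun ξ => if e ξ ∈ W then Complex.exp (H (e ξ)) else F (e ξ)
  have hez₂ : ∀ ξ, e ξ - z₂ ≠ 0 := fun ξ => by simp [e]
  have hez₁ : ∀ ξ, e ξ ∉ W → e ξ - z₁ ≠ 0 := fun ξ hξ h => hξ (by
    rw [sub_eq_zero] at h; rwa [h])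
  have hGc : Continuous G := by
    refine continuous_if ?_ ?_ ?_
    · intro ξ hξ
      have h1 : e ξ ∈ J := hWJ (hec.frontier_preimage_subset W hξ)
      rw [hHJ _ h1, hexp _ h1]
    · exact (by fun_prop : Continuous fun ξ => Complex.exp (H (e ξ))).continuousOn
    · have hcl : IsClosed {x | ¬ e x ∈ W} := (hWo.preimage hec).isClosed_compl
      rw [hcl.closure_eq]
      refine ContinuousOn.mul ?_ ?_
      · exact ContinuousOn.zpow₀ (by fun_prop) p (fun ξ hξ => Or.inl (hez₁ ξ hξ))
      · exact ContinuousOn.zpow₀ (by fun_prop) q (fun ξ hξ => Or.inl (hez₂ ξ))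
  have hG0 : ∀ ξ, G ξ ≠ 0 := by
    intro ξ
    by_cases hξ : e ξ ∈ W
    · simp only [G, hξ, if_true]; exact Complex.exp_ne_zero _
    · simp only [G, hξ, if_false, F]
      exact mul_ne_zero (zpow_ne_zero _ (hez₁ ξ hξ)) (zpow_ne_zero _ (hez₂ ξ))
  obtain ⟨Λ, hΛc, hΛ⟩ := exists_clog hGc hG0
  have hper : ∀ ξ, e (ξ + 2 * Real.pi * Complex.I) = e ξ := fun ξ => by
    simp [e, Complex.exp_add]
  have hD : ∀ x y, Λ (x + 2 * Real.pi * Complex.I) - Λ x = Λ (y + 2 * Real.pi * Complex.I) - Λ y :=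
    fun x y => clog_unique (S := univ) isPreconnected_univ
      (Λ₁ := fun x => Λ (x + 2 * Real.pi * Complex.I)) (Λ₂ := Λ)
      (by fun_prop) hΛc.continuousOn 1 (fun x _ => by
        rw [hΛ, hΛ, one_mul]; simp only [G, hper]) (mem_univ x) (mem_univ y)
  have hd : z₂ - z₁ ≠ 0 := fun h => hz₂ (by rw [sub_eq_zero] at h; rwa [h])
  -- left
  have hzcl : z₂ ∈ (closure W)ᶜ := by
    intro h
    by_cases hi : z₂ ∈ W
    · exact hz₂ hi
    · exact hz₂J (hWJ ⟨h, fun h' => hi (interior_subset h')⟩)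
  obtain ⟨r, hr, hball⟩ := Metric.isOpen_iff.1 isClosed_closure.isOpen_compl z₂ hzcl
  have hr1 : r ≤ ‖z₂ - z₁‖ := by
    by_contra hlt
    push Not at hlt
    refine hball (?_ : z₁ ∈ _) (subset_closure hz₁)
    rw [Metric.mem_ball, dist_comm, dist_eq_norm]; exact hlt
  have hpi2 : (2 * Real.pi * Complex.I : ℂ) ≠ 0 := Complex.two_pi_I_ne_zero
  have hleft : ∀ ξ, ξ.re < Real.log r → Λ (ξ + 2 * Real.pi * Complex.I) - Λ ξ
      = q * (2 * Real.pi * Complex.I) := by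
    intro ξ hξ
    have hn : ∀ x : ℂ, x.re < Real.log r → ‖Complex.exp x‖ < r := fun x hx => by
      rw [Complex.norm_exp, ← Real.exp_log hr]; exact Real.exp_lt_exp.2 hx
    have hn2 : ∀ x : ℂ, x.re < Real.log r → ‖Complex.exp x / (z₂ - z₁)‖ < 1 := fun x hx => by
      rw [norm_div, div_lt_one (norm_pos_iff.2 hd)]
      exact (hn x hx).trans_le hr1
    have := clog_unique (S := {x : ℂ | x.re < Real.log r})
      (convex_halfSpace_re_lt _).isPreconnected
      (Λ₁ := Λ) (Λ₂ := fun x => p * Complex.log (1 + Complex.exp x / (z₂ - z₁)) + q * x)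
      hΛc.continuousOn (by
        refine ContinuousOn.add (ContinuousOn.mul continuousOn_const
          (ContinuousOn.clog (by fun_prop) ?_)) (by fun_prop)
        intro x hx
        exact Complex.mem_slitPlane_of_norm_lt_one (hn2 x hx)) ((z₂ - z₁) ^ p) (by
        intro x hx
        have hx1 : e x ∉ W := fun h => hball (by
          rw [Metric.mem_ball, dist_eq_norm]; simpa [e] using hn x hx) (subset_closure h)
        have hne : 1 + Complex.exp x / (z₂ - z₁) ≠ 0 :=
          Complex.slitPlane_ne_zero (Complex.mem_slitPlane_of_norm_lt_one (hn2 x hx))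
        rw [hΛ, Complex.exp_add, Complex.exp_int_mul, Complex.exp_log hne, Complex.exp_int_mul]
        simp only [G, hx1, if_false, F]
        rw [← mul_assoc, ← mul_zpow]
        congr 2
        · simp only [e]; field_simp; ring
        · simp [e]) (x := ξ + 2 * Real.pi * Complex.I) (y := ξ) (by simpa using hξ) hξ
    rw [Complex.exp_add, Complex.exp_two_pi_mul_I, mul_one] at this
    linear_combination this
  -- right
  obtain ⟨R, hR⟩ := hWb.subset_ball z₂
  set R' := max (max R ‖z₂ - z₁‖) 1 with hR'
  have hR'0 : 0 < R' := lt_of_lt_of_le one_pos (le_max_right _ _)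
  have hright : ∀ ξ, Real.log R' < ξ.re → Λ (ξ + 2 * Real.pi * Complex.I) - Λ ξ
      = (p + q) * (2 * Real.pi * Complex.I) := by
    intro ξ hξ
    have hn : ∀ x : ℂ, Real.log R' < x.re → R' < ‖Complex.exp x‖ := fun x hx => by
      rw [Complex.norm_exp, ← Real.exp_log hR'0]; exact Real.exp_lt_exp.2 hx
    have hn2 : ∀ x : ℂ, Real.log R' < x.re → ‖(z₂ - z₁) / Complex.exp x‖ < 1 := fun x hx => by
      rw [norm_div, div_lt_one (norm_pos_iff.2 (Complex.exp_ne_zero _))]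
      exact lt_of_le_of_lt ((le_max_right _ _).trans (le_max_left _ _)) (hn x hx)
    have := clog_unique (S := {x : ℂ | Real.log R' < x.re})
      (convex_halfSpace_re_gt _).isPreconnected
      (Λ₁ := Λ) (Λ₂ := fun x => p * Complex.log (1 + (z₂ - z₁) / Complex.exp x) + (p * x + q * x))
      hΛc.continuousOn (by
        refine ContinuousOn.add (ContinuousOn.mul continuousOn_const
          (ContinuousOn.clog (ContinuousOn.add continuousOn_const 
            (ContinuousOn.div continuousOn_const (by fun_prop) 
              (fun x _ => Complex.exp_ne_zero x))) ?_)) (by fun_prop)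
        intro x hx
        exact Complex.mem_slitPlane_of_norm_lt_one (hn2 x hx)) 1 (by
        intro x hx
        have hx1 : e x ∉ W := fun h => by
          have h1 := hR h
          rw [Metric.mem_ball, dist_eq_norm] at h1
          have h2 := hn x hx
          have h3 : R ≤ R' := (le_max_left _ _).trans (le_max_left _ _)
          simp only [e, add_sub_cancel_left] at h1
          linarith
        have hne : 1 + (z₂ - z₁) / Complex.exp x ≠ 0 :=
          Complex.slitPlane_ne_zero (Complex.mem_slitPlane_of_norm_lt_one (hn2 x hx))
        rw [hΛ, one_mul, Complex.exp_add, Complex.exp_add, Complex.exp_int_mul,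
          Complex.exp_log hne, Complex.exp_int_mul, Complex.exp_int_mul]
        simp only [G, hx1, if_false, F]
        rw [← mul_assoc, ← mul_zpow]
        have := Complex.exp_ne_zero x
        congr 2
        · simp only [e]; field_simp; ring
        · simp [e]) (x := ξ + 2 * Real.pi * Complex.I) (y := ξ) (by simpa using hξ) hξ
    rw [Complex.exp_add, Complex.exp_two_pi_mul_I, mul_one] at this
    linear_combination this
  have h1 := hleft ((Real.log r - 1 : ℝ) : ℂ) (by simp)
  have h2 := hright ((Real.log R' + 1 : ℝ) : ℂ) (by simp)
  rw [hD _ ((Real.log r - 1 : ℝ) : ℂ), h1] at h2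
  have h3 := mul_right_cancel₀ hpi2 h2
  have : (p : ℂ) = 0 := by linear_combination -h3
  exact_mod_cast this

lemma descend {γ : ℝ → ℂ} {L : ℝ} (hγ : Continuous γ) (hL : 0 ≤ L) (hcl : γ 0 = γ L)
    (hinj : InjOn γ (Ico 0 L)) {k : ℝ → ℂ} (hk : Continuous k) (hk0 : k 0 = k L) :
    ∃ h : ℂ → ℂ, ContinuousOn h (γ '' Icc 0 L) ∧ ∀ s ∈ Icc 0 L, h (γ s) = k s := by
  classical
  let h : ℂ → ℂ := fun z => k (Function.invFunOn γ (Icc 0 L) z)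
  have key : ∀ s ∈ Icc 0 L, ∀ t ∈ Icc 0 L, γ s = γ t → k s = k t := by
    have h1 : ∀ s ∈ Icc 0 L, ∃ s' , (s' ∈ Ico 0 L ∨ L = 0 ∧ s' = 0) ∧ γ s' = γ s ∧ k s' = k s := by
      intro s hs
      rcases hs.2.eq_or_lt with h | h
      · refine ⟨0, ?_, by rw [hcl, h], by rw [hk0, h]⟩
        rcases hL.eq_or_lt with h' | h'
        · right; exact ⟨h'.symm, rfl⟩
        · left; exact ⟨le_rfl, h'⟩
      · exact ⟨s, Or.inl ⟨hs.1, h⟩, rfl, rfl⟩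
    intro s hs t ht hst
    obtain ⟨s', hs', e1, e2⟩ := h1 s hs
    obtain ⟨t', ht', e3, e4⟩ := h1 t ht
    rw [← e2, ← e4]
    rcases hs' with hs' | ⟨hs', hs''⟩ <;> rcases ht' with ht' | ⟨ht', ht''⟩
    · rw [hinj hs' ht' (by rw [e1, e3, hst])]
    · exfalso; have := hs'.1; have := hs'.2; linarith
    · exfalso; have := ht'.1; have := ht'.2; linarith
    · rw [hs'', ht'']
  have hval : ∀ s ∈ Icc 0 L, h (γ s) = k s := fun s hs =>
    key _ (Function.invFunOn_mem ⟨s, hs, rfl⟩) _ hs (Function.invFunOn_eq ⟨s, hs, rfl⟩)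
  refine ⟨h, ?_, hval⟩
  rw [continuousOn_iff_continuous_domRestrict]
  let Γ : Icc 0 L → γ '' Icc 0 L := fun s => ⟨γ s, mem_image_of_mem γ s.2⟩
  have hΓ : Continuous Γ := by fun_prop
  have hΓs : Function.Surjective Γ := by
    rintro ⟨_, s, hs, rfl⟩
    exact ⟨⟨s, hs⟩, rfl⟩
  have hq : IsQuotientMap Γ := hΓ.isClosedMap.isQuotientMap hΓ hΓs
  rw [hq.continuous_iff]
  have : ((γ '' Icc 0 L).domRestrict h) ∘ Γ = fun s : Icc 0 L => k s := by
    ext s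
    exact hval s s.2
  rw [this]
  fun_prop

lemma two_bounded_components {γ : ℝ → ℂ} {L : ℝ} (hγ : Continuous γ) (hL : 0 ≤ L)
    (hcl : γ 0 = γ L) (hinj : InjOn γ (Ico 0 L)) {W₁ W₂ : Set ℂ} (ho₁ : IsOpen W₁)
    (ho₂ : IsOpen W₂) (hb₁ : Bornology.IsBounded W₁) (hb₂ : Bornology.IsBounded W₂)
    (hf₁ : frontier W₁ ⊆ γ '' Icc 0 L) (hf₂ : frontier W₂ ⊆ γ '' Icc 0 L)
    {z₁ z₂ : ℂ} (h11 : z₁ ∈ W₁) (h22 : z₂ ∈ W₂) (h12 : z₁ ∉ W₂) (h21 : z₂ ∉ W₁)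
    (hJ₁ : z₁ ∉ γ '' Icc 0 L) (hJ₂ : z₂ ∉ γ '' Icc 0 L) : False := by
  have hJ : IsClosed (γ '' Icc 0 L) := (isCompact_Icc.image hγ).isClosed
  have hpm : ∀ s, max 0 (min L s) ∈ Icc 0 L := fun s => ⟨le_max_left _ _, max_le hL (min_le_left _ _)⟩
  have hpe : ∀ s ∈ Icc 0 L, max 0 (min L s) = s := fun s hs => by
    rw [min_eq_right hs.2, max_eq_right hs.1]
  have hlog : ∀ z, z ∉ γ '' Icc 0 L → ∃ ℓ : ℝ → ℂ, Continuous ℓ ∧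
      (∀ s ∈ Icc 0 L, Complex.exp (ℓ s) = γ s - z) ∧
      ∃ n : ℤ, ℓ L = ℓ 0 + n * (2 * Real.pi * Complex.I) := by
    intro z hz
    obtain ⟨ℓ, h1, h2⟩ := exists_clog (g := fun s : ℝ => γ (max 0 (min L s)) - z) (by fun_prop)
      (fun s h => hz ⟨_, hpm s, sub_eq_zero.1 h⟩)
    have h3 : ∀ s ∈ Icc 0 L, Complex.exp (ℓ s) = γ s - z := fun s hs => by
      rw [h2, hpe s hs]
    refine ⟨ℓ, h1, h3, ?_⟩
    apply Complex.exp_eq_exp_iff_exists_int.1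
    rw [h3 L (right_mem_Icc.2 hL), h3 0 (left_mem_Icc.2 hL), hcl]
  obtain ⟨ℓ₁, hc₁, he₁, n₁, hn₁⟩ := hlog z₁ hJ₁
  obtain ⟨ℓ₂, hc₂, he₂, n₂, hn₂⟩ := hlog z₂ hJ₂
  have hn2 : n₂ = 0 := by
    obtain ⟨h, hh, hhv⟩ := descend hγ hL hcl hinj (k := fun s => n₂ * ℓ₁ s + (-n₁ : ℤ) * ℓ₂ s)
      (by fun_prop) (by simp only [hn₁, hn₂]; push_cast; ring)
    refine degree_zero hJ ho₁ hb₁ hf₁ h11 hJ₁ h21 hJ₂ n₂ (-n₁) hh ?_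
    rintro _ ⟨s, hs, rfl⟩
    rw [hhv s hs, Complex.exp_add, Complex.exp_int_mul, Complex.exp_int_mul, he₁ s hs, he₂ s hs]
  obtain ⟨h, hh, hhv⟩ := descend hγ hL hcl hinj (k := ℓ₂) hc₂ (by rw [hn₂, hn2]; simp)
  have := degree_zero hJ ho₂ hb₂ hf₂ h22 hJ₂ h12 hJ₁ 1 0 hh (by
    rintro _ ⟨s, hs, rfl⟩
    rw [hhv s hs, he₂ s hs]; simp)
  exact one_ne_zero this

/-- Cauchy integral along the arclength parametrisation. -/
noncomputable def cauchyI (γ : ℝ → ℂ) (L : ℝ) (h : ℝ → ℂ) (z : ℂ) : ℂ :=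
  ∫ s in (0:ℝ)..L, h s / (γ s - z) * deriv γ s

lemma cont_div {γ : ℝ → ℂ} {L : ℝ} (hγ : LipschitzWith 1 γ) {h : ℝ → ℂ}
    (hh : ContinuousOn h (Icc 0 L)) {z : ℂ} (hz : z ∉ γ '' Icc 0 L) :
    ContinuousOn (fun s => h s / (γ s - z)) (Icc 0 L) :=
  hh.div ((hγ.continuous.sub continuous_const).continuousOn)
    (fun s hs h0 => hz ⟨s, hs, sub_eq_zero.1 h0⟩)

lemma J_dist {γ : ℝ → ℂ} {L : ℝ} (hγ : LipschitzWith 1 γ) {z : ℂ} (hz : z ∉ γ '' Icc 0 L) :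
    ∃ r > 0, ∀ s ∈ Icc 0 L, r ≤ ‖γ s - z‖ := by
  have hJ : IsClosed (γ '' Icc 0 L) := (isCompact_Icc.image hγ.continuous).isClosed
  obtain ⟨r, hr, hb⟩ := Metric.isOpen_iff.1 hJ.isOpen_compl z hz
  refine ⟨r, hr, fun s hs => ?_⟩
  by_contra hlt
  push Not at hlt
  exact hb (by rw [Metric.mem_ball, dist_eq_norm]; exact hlt) (mem_image_of_mem γ hs)

lemma cauchyI_hasDerivAt {γ : ℝ → ℂ} {L : ℝ} (hγ : LipschitzWith 1 γ) (hL : 0 ≤ L) {h : ℝ → ℂ}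
    (hh : ContinuousOn h (Icc 0 L)) {z : ℂ} (hz : z ∉ γ '' Icc 0 L) :
    HasDerivAt (cauchyI γ L h) (∫ s in (0:ℝ)..L, h s / (γ s - z) ^ 2 * deriv γ s) z := by
  obtain ⟨r, hr, hrs⟩ := J_dist hγ hz
  obtain ⟨B, hB⟩ := isCompact_Icc.exists_bound_of_continuousOn hh
  have hu : uIcc 0 L = Icc 0 L := uIcc_of_le hL
  have hm : uIoc 0 L ⊆ Icc 0 L := by rw [uIoc_of_le hL]; exact Ioc_subset_Icc_self
  have hb : ∀ w ∈ Metric.ball z (r/2), ∀ s ∈ Icc 0 L, r / 2 ≤ ‖γ s - w‖ := by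
    intro w hw s hs
    rw [Metric.mem_ball, dist_eq_norm] at hw
    have h1 := hrs s hs
    have h2 : ‖γ s - z‖ ≤ ‖γ s - w‖ + ‖w - z‖ := by
      have := norm_add_le (γ s - w) (w - z); simpa using this
    linarith
  have hbJ : ∀ w ∈ Metric.ball z (r/2), w ∉ γ '' Icc 0 L := by
    rintro w hw ⟨s, hs, rfl⟩
    have := hb _ hw s hs
    simp at this; linarith
  have hii : ∀ w ∈ Metric.ball z (r/2), IntervalIntegrable (fun s => h s / (γ s - w) * deriv γ s) volume 0 L :=
    fun w hw => lip_mul_intervalIntegrable hγ (by rw [hu]; exact cont_div hγ hh (hbJ w hw))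
  have hball : Metric.ball z (r/2) ∈ 𝓝 z := Metric.ball_mem_nhds z (by linarith)
  have h2 : IntervalIntegrable (fun s => h s / (γ s - z) ^ 2 * deriv γ s) volume 0 L := by
    refine lip_mul_intervalIntegrable (g := fun s => h s / (γ s - z)^2) hγ ?_
    rw [hu]
    refine hh.div (((hγ.continuous.sub continuous_const).pow 2).continuousOn)
      (fun s hs h0 => hz ⟨s, hs, sub_eq_zero.1 (pow_eq_zero_iff (two_ne_zero)|>.1 h0)⟩)
  refine (intervalIntegral.hasDerivAt_integral_of_dominated_loc_of_deriv_le
    (F := fun w s => h s / (γ s - w) * deriv γ s)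
    (F' := fun w s => h s / (γ s - w) ^ 2 * deriv γ s) (bound := fun _ => B / (r/2)^2)
    hball ?_ (hii z (mem_of_mem_nhds hball)) ?_ ?_ ?_ ?_).2
  · filter_upwards [hball] with w hw
    exact (hii w hw).def'.aestronglyMeasurable
  · exact h2.def'.aestronglyMeasurable
  · refine Eventually.of_forall fun s hs w hw => ?_
    have h1 := hb w hw s (hm hs)
    have hB1 := hB s (hm hs)
    have hB0 : 0 ≤ B := (norm_nonneg _).trans hB1
    rw [norm_mul, norm_div, norm_pow]
    calc _ ≤ B / (r/2)^2 * 1 := by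
          gcongr
          exact lip_deriv_le hγ s
      _ = _ := mul_one _
  · exact intervalIntegrable_const
  · refine Eventually.of_forall fun s hs w hw => ?_
    have hne : γ s - w ≠ 0 := fun h0 => hbJ w hw ⟨s, hm hs, sub_eq_zero.1 h0⟩
    have := (((hasDerivAt_id w).const_sub (γ s)).inv hne).const_mul (h s) |>.mul_const (deriv γ s)
    refine this.congr_deriv ?_ |>.congr_of_eventuallyEq ?_
    · simp [div_eq_mul_inv]
    · exact Eventually.of_forall fun x => by simp [div_eq_mul_inv]

lemma cauchyI_far {γ : ℝ → ℂ} {L : ℝ} (hγ : LipschitzWith 1 γ) (hL : 0 ≤ L) {h : ℝ → ℂ}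
    (hh : ContinuousOn h (Icc 0 L))
    (hmom : ∀ k : ℕ, ∫ s in (0:ℝ)..L, (γ s) ^ k * h s * deriv γ s = 0) :
    ∃ R > 0, ∀ z, R < ‖z‖ → cauchyI γ L h z = 0 := by
  obtain ⟨R, hR⟩ := isCompact_Icc.exists_bound_of_continuousOn (hγ.continuous.continuousOn (s := Icc 0 L))
  obtain ⟨B, hB⟩ := isCompact_Icc.exists_bound_of_continuousOn hh
  have hu : uIcc 0 L = Icc 0 L := uIcc_of_le hL
  have hm : uIoc 0 L ⊆ Icc 0 L := by rw [uIoc_of_le hL]; exact Ioc_subset_Icc_self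
  have hR0 : 0 ≤ R := (norm_nonneg _).trans (hR 0 (left_mem_Icc.2 hL))
  have hB0 : 0 ≤ B := (norm_nonneg _).trans (hB 0 (left_mem_Icc.2 hL))
  refine ⟨R + 1, by linarith, fun z hz => ?_⟩
  have hz0 : z ≠ 0 := norm_pos_iff.1 (by linarith)
  have hne : ∀ s ∈ Icc 0 L, 1 ≤ ‖γ s - z‖ := fun s hs => by
    have := norm_sub_norm_le z (γ s); rw [norm_sub_rev] at this
    linarith [hR s hs]
  have hzJ : z ∉ γ '' Icc 0 L := by
    rintro ⟨s, hs, rfl⟩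
    have := hR s hs; linarith
  have hci : ∀ n : ℕ, IntervalIntegrable (fun s => (γ s / z) ^ n * (h s / (γ s - z)) * deriv γ s) volume 0 L := by
    intro n
    refine lip_mul_intervalIntegrable (g := fun s => (γ s / z) ^ n * (h s / (γ s - z))) hγ ?_
    rw [hu]
    exact ((hγ.continuous.div_const z).pow n).continuousOn.mul (cont_div hγ hh hzJ)
  have hstep : ∀ n : ℕ, cauchyI γ L h z = ∫ s in (0:ℝ)..L, (γ s / z) ^ n * (h s / (γ s - z)) * deriv γ s := by
    intro n
    induction n with
    | zero => simp [cauchyI]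
    | succ n ih =>
      rw [ih, ← sub_eq_zero, ← intervalIntegral.integral_sub (hci n) (hci (n+1))]
      have : ∫ s in (0:ℝ)..L, ((γ s / z) ^ n * (h s / (γ s - z)) * deriv γ s
          - (γ s / z) ^ (n+1) * (h s / (γ s - z)) * deriv γ s)
          = ∫ s in (0:ℝ)..L, (-1 / z^(n+1)) * (γ s ^ n * h s * deriv γ s) := by
        refine intervalIntegral.integral_congr fun s hs => ?_
        rw [hu] at hs
        have h1 : γ s - z ≠ 0 := norm_pos_iff.1 (by linarith [hne s hs])
        rw [div_pow, div_pow]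
        field_simp
        ring
      rw [this, intervalIntegral.integral_const_mul, hmom, mul_zero]
  have hbd : ∀ n : ℕ, ‖cauchyI γ L h z‖ ≤ (R / ‖z‖)^n * B * |L - 0| := by
    intro n
    rw [hstep n]
    refine intervalIntegral.norm_integral_le_of_norm_le_const fun s hs => ?_
    rw [norm_mul, norm_mul, norm_pow, norm_div, norm_div]
    have h1 := hne s (hm hs)
    calc _ ≤ (R / ‖z‖)^n * (B / 1) * 1 := by
          gcongr
          · exact hR s (hm hs)
          · exact hB s (hm hs)
          · exact lip_deriv_le hγ s
      _ = _ := by ring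
  have hlim : Tendsto (fun n : ℕ => (R / ‖z‖)^n * B * |L - 0|) atTop (𝓝 (0 * B * |L - 0|)) := by
    refine ((tendsto_pow_atTop_nhds_zero_of_lt_one (by positivity) ?_).mul_const _).mul_const _
    rw [div_lt_one (by linarith)]; linarith
  have := ge_of_tendsto' hlim hbd
  simpa using this

lemma cauchyI_unbdd {γ : ℝ → ℂ} {L : ℝ} (hγ : LipschitzWith 1 γ) (hL : 0 ≤ L) {h : ℝ → ℂ}
    (hh : ContinuousOn h (Icc 0 L))
    (hmom : ∀ k : ℕ, ∫ s in (0:ℝ)..L, (γ s) ^ k * h s * deriv γ s = 0)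
    {z : ℂ} (hz : z ∉ γ '' Icc 0 L)
    (hub : ¬ Bornology.IsBounded (connectedComponentIn (γ '' Icc 0 L)ᶜ z)) :
    cauchyI γ L h z = 0 := by
  have hJ : IsClosed (γ '' Icc 0 L) := (isCompact_Icc.image hγ.continuous).isClosed
  obtain ⟨R, hR, hfar⟩ := cauchyI_far hγ hL hh hmom
  set V := connectedComponentIn (γ '' Icc 0 L)ᶜ z with hV
  have hVo : IsOpen V := hJ.isOpen_compl.connectedComponentIn
  have hVs : V ⊆ (γ '' Icc 0 L)ᶜ := connectedComponentIn_subset _ _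
  have hp : ∃ p ∈ V, R < ‖p‖ := by
    by_contra hcon
    push Not at hcon
    exact hub ((Metric.isBounded_closedBall (x := (0:ℂ)) (r := R)).subset fun p hp => by
      simpa using hcon p hp)
  obtain ⟨p, hpV, hpR⟩ := hp
  have hd : DifferentiableOn ℂ (cauchyI γ L h) V := fun w hw =>
    (cauchyI_hasDerivAt hγ hL hh (hVs hw)).differentiableAt.differentiableWithinAt
  have han := hd.analyticOnNhd hVo
  refine han.eqOn_zero_of_preconnected_of_eventuallyEq_zero isPreconnected_connectedComponentIn hpV
    ?_ (mem_connectedComponentIn hz)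
  have : {w : ℂ | R < ‖w‖} ∈ 𝓝 p := (isOpen_lt continuous_const continuous_norm).mem_nhds hpR
  filter_upwards [this] with w hw
  exact hfar w hw

lemma one_moments {γ : ℝ → ℂ} {L : ℝ} (hγ : LipschitzWith 1 γ) (hL : 0 ≤ L) (hcl : γ 0 = γ L)
    (k : ℕ) : ∫ s in (0:ℝ)..L, (γ s) ^ k * (1:ℂ) * deriv γ s = 0 := by
  have := lip_chain_ftc hγ hL (fun w => w^(k+1) / (k+1)) (fun w => w^k) (fun x _ => by
    have h0 : ((k:ℂ)+1) ≠ 0 := by exact_mod_cast Nat.succ_ne_zero k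
    have := (hasDerivAt_pow (k+1) (γ x)).div_const ((k:ℂ)+1)
    refine this.congr_deriv ?_
    push_cast
    field_simp) ((hγ.continuous.pow k).continuousOn)
  simp only [mul_one]
  rw [this, hcl, sub_self]

lemma winding_const {γ : ℝ → ℂ} {L : ℝ} (hγ : LipschitzWith 1 γ) (hL : 0 ≤ L) (hcl : γ 0 = γ L)
    {V : Set ℂ} (hVo : IsOpen V) (hVc : IsPreconnected V) (hVs : V ⊆ (γ '' Icc 0 L)ᶜ) {z w : ℂ}
    (hz : z ∈ V) (hw : w ∈ V) : cauchyI γ L (fun _ => 1) z = cauchyI γ L (fun _ => 1) w := by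
  have hD : ∀ x ∈ V, HasDerivAt (cauchyI γ L (fun _ => 1)) 0 x := by
    intro x hx
    have h1 := cauchyI_hasDerivAt hγ hL (h := fun _ => 1) continuousOn_const (hVs hx)
    have hne : ∀ s ∈ Icc 0 L, γ s - x ≠ 0 := fun s hs h0 => hVs hx ⟨s, hs, sub_eq_zero.1 h0⟩
    have := lip_chain_ftc hγ hL (fun w => -(w - x)⁻¹) (fun w => 1 / (w - x)^2) (fun s hs => by
      have := (((hasDerivAt_id (γ s)).sub_const x).inv (hne s hs)).neg
      refine this.congr_deriv ?_
      simp [neg_div]) (by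
        refine continuousOn_const.div (((hγ.continuous.sub continuous_const).pow 2).continuousOn) ?_
        exact fun s hs => pow_ne_zero 2 (hne s hs))
    rw [this, hcl, sub_self] at h1
    exact h1
  exact hVo.is_const_of_deriv_eq_zero hVc
    (fun x hx => (hD x hx).differentiableAt.differentiableWithinAt)
    (fun x hx => (hD x hx).deriv) hz hw

lemma cone_bound {m : ℝ} (hm0 : 0 < m) (hm1 : m ≤ 1) {q σ : ℂ} {x : ℝ}
    (hσ : m * ‖σ‖ ≤ |σ.im|) (hq : ‖q - x‖ ≤ m / 6 * |x|) :
    m / 6 * (|x| + ‖σ‖) ≤ ‖q - σ‖ := by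
  have h1 : |σ.im| ≤ ‖(x:ℂ) - σ‖ := by
    have := Complex.abs_im_le_norm ((x:ℂ) - σ); simpa using this
  have h2 : |x| ≤ ‖(x:ℂ) - σ‖ + ‖σ‖ := by
    have := norm_add_le ((x:ℂ) - σ) σ; simpa using this
  have h3 : ‖(x:ℂ) - σ‖ ≤ ‖q - σ‖ + ‖q - x‖ := by
    have := norm_sub_le (q - σ) (q - x); simpa using this
  have h4 := norm_nonneg ((x:ℂ) - σ)
  nlinarith [norm_nonneg σ, abs_nonneg x]

lemma stolz_cone {M : ℝ} (hM : 1 < M) {q σ : ℂ} (hst : ‖σ‖ ≤ M * ‖q - σ‖)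
    (hq : ‖q - (σ.re : ℝ)‖ ≤ (1 / (2 * M)) / 6 * |σ.re|) :
    1 / (2 * M) * ‖σ‖ ≤ |σ.im| := by
  have h1 : ‖((σ.re : ℝ) : ℂ) - σ‖ = |σ.im| := by
    have : ((σ.re : ℝ) : ℂ) - σ = -(σ.im * Complex.I) := by
      apply Complex.ext <;> simp
    rw [this, norm_neg, norm_mul, Complex.norm_I, mul_one, Complex.norm_real, Real.norm_eq_abs]
  have h2 : ‖q - σ‖ ≤ ‖q - (σ.re : ℝ)‖ + ‖((σ.re : ℝ) : ℂ) - σ‖ := by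
    have := norm_add_le (q - (σ.re : ℝ)) (((σ.re : ℝ) : ℂ) - σ); simpa using this
  have h3 := Complex.abs_re_le_norm σ
  have hM0 : 0 < M := by linarith
  have h4 : M * ‖q - σ‖ ≤ M * ((1 / (2 * M)) / 6 * ‖σ‖ + |σ.im|) := by
    gcongr
    rw [h1] at h2
    refine h2.trans ?_
    gcongr
    exact hq.trans (by gcongr)
  have h5 : M * ((1 / (2 * M)) / 6 * ‖σ‖ + |σ.im|) = ‖σ‖ / 12 + M * |σ.im| := by
    field_simp; ring
  rw [h5] at h4
  have h6 : 1 / (2 * M) * ‖σ‖ = ‖σ‖ / (2 * M) := by ring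
  rw [h6, div_le_iff₀ (by positivity)]
  nlinarith [norm_nonneg σ]

lemma local_setup {γ : ℝ → ℂ} {L s₀ : ℝ} {u : ℂ} (hs₀ : s₀ ∈ Ioo 0 L) (hd : HasDerivAt γ u s₀)
    (hu : u ≠ 0) {κ : ℝ} (hκ : 0 < κ) : ∃ η > 0, (∀ s, |s - s₀| ≤ η → s ∈ Ioo 0 L) ∧
      ∀ s, |s - s₀| ≤ η → ‖(γ s - γ s₀) / u - ((s - s₀ : ℝ) : ℂ)‖ ≤ κ * |s - s₀| := by
  have hu' : 0 < ‖u‖ := norm_pos_iff.2 hu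
  have h1 := (hasDerivAt_iff_isLittleO.1 hd).bound (mul_pos hκ hu')
  have h2 := isOpen_Ioo.mem_nhds hs₀
  obtain ⟨η, hη, hb⟩ := Metric.eventually_nhds_iff.1 (h1.and h2)
  refine ⟨η / 2, by linarith, fun s hs => (hb ?_).2, fun s hs => ?_⟩
  · rw [Real.dist_eq]; linarith
  · have := (hb (y := s) (by rw [Real.dist_eq]; linarith)).1
    have e : (γ s - γ s₀) / u - ((s - s₀ : ℝ) : ℂ) = (γ s - γ s₀ - (s - s₀) • u) / u := by
      rw [Complex.real_smul]
      field_simp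
    rw [e, norm_div, div_le_iff₀ hu']
    rw [Real.norm_eq_abs] at this
    linarith

lemma far_bound {γ : ℝ → ℂ} {L s₀ : ℝ} (hγ : Continuous γ) (hcl : γ 0 = γ L)
    (hinj : InjOn γ (Ico 0 L)) (hs₀ : s₀ ∈ Ioo 0 L) {η : ℝ} (hη : 0 < η) :
    ∃ c > 0, ∀ s ∈ Icc 0 L, η ≤ |s - s₀| → c ≤ ‖γ s - γ s₀‖ := by
  have hK : IsCompact (Icc 0 L ∩ {s : ℝ | η ≤ |s - s₀|}) :=
    isCompact_Icc.inter_right (isClosed_le continuous_const (by fun_prop))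
  have hcl' : IsClosed (γ '' (Icc 0 L ∩ {s : ℝ | η ≤ |s - s₀|})) := (hK.image hγ).isClosed
  have hn : γ s₀ ∉ γ '' (Icc 0 L ∩ {s : ℝ | η ≤ |s - s₀|}) := by
    rintro ⟨s, ⟨hs, hs'⟩, he⟩
    have hL : 0 < L := hs₀.1.trans hs₀.2
    have : s = s₀ := by
      rcases hs.2.eq_or_lt with h | h
      · have : (0:ℝ) = s₀ := hinj ⟨le_rfl, hL⟩ ⟨hs₀.1.le, hs₀.2⟩ (by rw [hcl, ← h, he])
        exact absurd this hs₀.1.ne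
      · exact hinj ⟨hs.1, h⟩ ⟨hs₀.1.le, hs₀.2⟩ he
    subst this
    simp at hs'
    linarith
  obtain ⟨c, hc, hb⟩ := Metric.isOpen_iff.1 hcl'.isOpen_compl _ hn
  refine ⟨c, hc, fun s hs hs' => ?_⟩
  by_contra hlt
  push Not at hlt
  exact hb (by rw [Metric.mem_ball, dist_eq_norm]; exact hlt) (mem_image_of_mem γ ⟨hs, hs'⟩)

lemma arctan_kernel {a s₀ p q : ℝ} (ha : 0 < a) :
    IntervalIntegrable (fun s => a / ((s - s₀)^2 + a^2)) volume p q ∧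
    ∫ s in p..q, a / ((s - s₀)^2 + a^2) ≤ Real.pi := by
  have hc : Continuous (fun s => a / ((s - s₀)^2 + a^2)) :=
    continuous_const.div (by fun_prop) (fun s => by positivity)
  refine ⟨hc.intervalIntegrable _ _, ?_⟩
  have : ∀ s, HasDerivAt (fun s => Real.arctan ((s - s₀) / a)) (a / ((s - s₀)^2 + a^2)) s := by
    intro s
    have := (((hasDerivAt_id s).sub_const s₀).div_const a).arctan
    refine this.congr_deriv ?_
    simp only [id]
    field_simp
    ring
  rw [intervalIntegral.integral_eq_sub_of_hasDerivAt (fun s _ => this s) (hc.intervalIntegrable _ _)]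
  have h1 := Real.arctan_lt_pi_div_two ((q - s₀)/a)
  have h2 := Real.neg_pi_div_two_lt_arctan ((p - s₀)/a)
  linarith

/-- pointwise lower bounds near the point -/
lemma near_bd {m : ℝ} (hm0 : 0 < m) (hm1 : m ≤ 1) {u w ζ v : ℂ} (hu : u ≠ 0) {x : ℝ}
    (hσ : m * ‖v / u‖ ≤ |(v / u).im|) (hq : ‖(w - ζ) / u - x‖ ≤ m / 6 * |x|) :
    ‖u‖ * (m / 6 * (|x| + ‖v / u‖)) ≤ ‖w - (ζ + v)‖ := by
  have h := cone_bound hm0 hm1 hσ hq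
  have e : (w - (ζ + v)) = u * ((w - ζ) / u - v / u) := by field_simp; ring
  rw [e, norm_mul]
  gcongr

lemma near_bd' {m : ℝ} (hm0 : 0 < m) (hm1 : m ≤ 1) {u w ζ v : ℂ} (hu : u ≠ 0) {x : ℝ}
    (hσ : m * ‖v / u‖ ≤ |(v / u).im|) (hq : ‖(w - ζ) / u - x‖ ≤ m / 6 * |x|) :
    ‖u‖ * (m / 6 * (|x| + ‖v / u‖)) ≤ ‖w - (ζ - v)‖ := by
  have := near_bd hm0 hm1 hu (v := -v) (by simpa [neg_div] using hσ) hq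
  simpa [neg_div, sub_eq_add_neg] using this

lemma far_bd {w ζ v : ℂ} {c : ℝ} (hc : c ≤ ‖w - ζ‖) (hv : ‖v‖ ≤ c / 2) :
    c / 2 ≤ ‖w - (ζ + v)‖ ∧ c / 2 ≤ ‖w - (ζ - v)‖ := by
  have h1 : ‖w - ζ‖ ≤ ‖w - (ζ + v)‖ + ‖v‖ := by
    have := norm_add_le (w - (ζ + v)) v
    rwa [show w - (ζ + v) + v = w - ζ by ring] at this
  have h2 : ‖w - ζ‖ ≤ ‖w - (ζ - v)‖ + ‖v‖ := by
    have := norm_sub_le (w - (ζ - v)) v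
    rwa [show w - (ζ - v) - v = w - ζ by ring] at this
  constructor <;> linarith

lemma not_mem_J {γ : ℝ → ℂ} {L s₀ η c m : ℝ} {u v : ℂ} (hm0 : 0 < m) (hm1 : m ≤ 1) (hu : u ≠ 0)
    (hloc : ∀ s, |s - s₀| ≤ η → ‖(γ s - γ s₀) / u - ((s - s₀ : ℝ) : ℂ)‖ ≤ m / 6 * |s - s₀|)
    (hc0 : 0 < c) (hc : ∀ s ∈ Icc 0 L, η ≤ |s - s₀| → c ≤ ‖γ s - γ s₀‖)
    (hσ : m * ‖v / u‖ ≤ |(v / u).im|) (hv : ‖v‖ ≤ c / 2) (hv0 : v ≠ 0) :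
    γ s₀ + v ∉ γ '' Icc 0 L ∧ γ s₀ - v ∉ γ '' Icc 0 L := by
  have hp : ∀ x : ℝ, 0 < ‖u‖ * (m / 6 * (|x| + ‖v / u‖)) := fun x => by
    have h1 : 0 < ‖u‖ := norm_pos_iff.2 hu
    have h2 : 0 < ‖v / u‖ := norm_pos_iff.2 (div_ne_zero hv0 hu)
    positivity
  constructor
  · rintro ⟨s, hs, he⟩
    rcases le_total |s - s₀| η with h | h
    · have := (hp (s - s₀)).trans_le (near_bd hm0 hm1 hu hσ (hloc s h))
      rw [he, sub_self, norm_zero] at this; exact this.false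
    · have := (far_bd (hc s hs h) hv).1
      rw [he, sub_self, norm_zero] at this; linarith
  · rintro ⟨s, hs, he⟩
    rcases le_total |s - s₀| η with h | h
    · have := (hp (s - s₀)).trans_le (near_bd' hm0 hm1 hu hσ (hloc s h))
      rw [he, sub_self, norm_zero] at this; exact this.false
    · have := (far_bd (hc s hs h) hv).2
      rw [he, sub_self, norm_zero] at this; linarith

lemma cauchyI_sub {γ : ℝ → ℂ} {L : ℝ} (hγ : LipschitzWith 1 γ) (hL : 0 ≤ L) {h : ℝ → ℂ}
    (hh : ContinuousOn h (Icc 0 L)) {ζ v : ℂ} (h1 : ζ + v ∉ γ '' Icc 0 L)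
    (h2 : ζ - v ∉ γ '' Icc 0 L) : cauchyI γ L h (ζ + v) - cauchyI γ L h (ζ - v) =
      ∫ s in (0:ℝ)..L, h s * (2 * v / ((γ s - (ζ + v)) * (γ s - (ζ - v)))) * deriv γ s := by
  have hu : uIcc 0 L = Icc 0 L := uIcc_of_le hL
  unfold cauchyI
  rw [← intervalIntegral.integral_sub
    (lip_mul_intervalIntegrable (g := fun s => h s / (γ s - (ζ + v))) hγ (by rw [hu]; exact cont_div hγ hh h1))
    (lip_mul_intervalIntegrable (g := fun s => h s / (γ s - (ζ - v))) hγ (by rw [hu]; exact cont_div hγ hh h2))]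
  refine intervalIntegral.integral_congr fun s hs => ?_
  rw [hu] at hs
  have e1 : γ s - (ζ + v) ≠ 0 := fun h0 => h1 ⟨s, hs, sub_eq_zero.1 h0⟩
  have e2 : γ s - (ζ - v) ≠ 0 := fun h0 => h2 ⟨s, hs, sub_eq_zero.1 h0⟩
  field_simp
  ring

lemma D_small {γ : ℝ → ℂ} {L s₀ : ℝ} {u : ℂ} (hγ : LipschitzWith 1 γ) (hcl : γ 0 = γ L)
    (hinj : InjOn γ (Ico 0 L)) (hs₀ : s₀ ∈ Ioo 0 L) (hd : HasDerivAt γ u s₀)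
    (hu : u ≠ 0) {h : ℝ → ℂ} (hh : ContinuousOn h (Icc 0 L)) (h0 : h s₀ = 0)
    {m : ℝ} (hm0 : 0 < m) (hm1 : m ≤ 1) {ε : ℝ} (hε : 0 < ε) :
    ∀ᶠ v in 𝓝 (0:ℂ), v ≠ 0 → m * ‖v / u‖ ≤ |(v / u).im| →
      ‖cauchyI γ L h (γ s₀ + v) - cauchyI γ L h (γ s₀ - v)‖ ≤ ε := by
  have hL : 0 < L := hs₀.1.trans hs₀.2
  have hu' : 0 < ‖u‖ := norm_pos_iff.2 hu
  obtain ⟨B, hB⟩ := isCompact_Icc.exists_bound_of_continuousOn hh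
  have hB0 : 0 ≤ B := (norm_nonneg _).trans (hB 0 (left_mem_Icc.2 hL.le))
  set k : ℝ := 72 / (‖u‖ * m^2) with hk
  have hk0 : 0 < k := by positivity
  have hpi := Real.pi_pos
  set ε' : ℝ := ε / (2 * k * Real.pi) with hε'
  have hε'0 : 0 < ε' := by positivity
  obtain ⟨η₁, hη₁, hin, hloc₁⟩ := local_setup hs₀ hd hu (κ := m / 6) (by positivity)
  have hca : ContinuousAt h s₀ := hh.continuousAt (Icc_mem_nhds hs₀.1 hs₀.2)
  obtain ⟨η₂, hη₂, hsm⟩ := Metric.continuousAt_iff.1 hca ε' hε'0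
  set η := min η₁ (η₂ / 2) with hη
  have hη0 : 0 < η := lt_min hη₁ (by linarith)
  have hloc : ∀ s, |s - s₀| ≤ η → ‖(γ s - γ s₀) / u - ((s - s₀ : ℝ) : ℂ)‖ ≤ m / 6 * |s - s₀| :=
    fun s hs => hloc₁ s (hs.trans (min_le_left _ _))
  have hsmall : ∀ s, |s - s₀| ≤ η → ‖h s‖ ≤ ε' := fun s hs => by
    have := hsm (x := s) (by
      rw [Real.dist_eq]; have := hs.trans (min_le_right _ _); linarith)
    rw [h0, dist_zero_right] at this; exact this.le
  obtain ⟨c, hc0, hc⟩ := far_bound hγ.continuous hcl hinj hs₀ hη0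
  have hr : 0 < min (c / 2) (ε * c^2 / (16 * (B + 1) * L)) := lt_min (by linarith) (by positivity)
  filter_upwards [Metric.ball_mem_nhds (0:ℂ) hr] with v hv hv0 hσ
  rw [mem_ball_zero_iff, lt_min_iff] at hv
  obtain ⟨hv1, hv2⟩ := hv
  obtain ⟨hJ1, hJ2⟩ := not_mem_J hm0 hm1 hu hloc hc0 hc hσ hv1.le hv0
  rw [cauchyI_sub hγ hL.le hh hJ1 hJ2]
  set a := ‖v / u‖ with ha
  have ha0 : 0 < a := norm_pos_iff.2 (div_ne_zero hv0 hu)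
  have hva : ‖v‖ = ‖u‖ * a := by rw [ha, norm_div]; field_simp
  obtain ⟨hki, hkpi⟩ := arctan_kernel (a := a) (s₀ := s₀) (p := 0) (q := L) ha0
  have hbound : ∀ s ∈ Icc 0 L, ‖h s * (2 * v / ((γ s - (γ s₀ + v)) * (γ s - (γ s₀ - v)))) * deriv γ s‖
      ≤ ε' * k * (a / ((s - s₀)^2 + a^2)) + B * 8 * ‖v‖ / c^2 := by
    intro s hs
    have hd1 := lip_deriv_le hγ s
    rw [norm_mul, norm_mul, norm_div, norm_mul, norm_mul, Complex.norm_ofNat]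
    have t1 : 0 ≤ ε' * k * (a / ((s - s₀)^2 + a^2)) := by positivity
    have t2 : 0 ≤ B * 8 * ‖v‖ / c^2 := by positivity
    rcases le_total |s - s₀| η with hx | hx
    · have n1 := near_bd hm0 hm1 hu hσ (hloc s hx)
      have n2 := near_bd' hm0 hm1 hu hσ (hloc s hx)
      have hpos : 0 < ‖u‖ * (m / 6 * (|s - s₀| + a)) := by positivity
      calc _ ≤ ε' * (2 * ‖v‖ / ((‖u‖ * (m / 6 * (|s - s₀| + a))) * (‖u‖ * (m / 6 * (|s - s₀| + a))))) * 1 := by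
            gcongr
            exact hsmall s hx
        _ = ε' * k * (a / (|s - s₀| + a)^2) := by
            rw [hva, hk]; field_simp; ring
        _ ≤ ε' * k * (a / ((s - s₀)^2 + a^2)) := by
            gcongr
            rw [← sq_abs (s - s₀)]
            nlinarith [abs_nonneg (s - s₀)]
        _ ≤ _ := by linarith
    · obtain ⟨n1, n2⟩ := far_bd (hc s hs hx) hv1.le
      calc _ ≤ B * (2 * ‖v‖ / ((c/2) * (c/2))) * 1 := by
            gcongr
            exact hB s hs
        _ = B * 8 * ‖v‖ / c^2 := by field_simp; ring
        _ ≤ _ := by linarith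
  have hI := intervalIntegral.norm_integral_le_of_norm_le hL.le
    (Eventually.of_forall fun s hs => hbound s (Ioc_subset_Icc_self hs))
    ((hki.const_mul (ε' * k)).add intervalIntegrable_const)
  refine hI.trans ?_
  rw [intervalIntegral.integral_add (hki.const_mul (ε' * k)) intervalIntegrable_const,
    intervalIntegral.integral_const_mul, intervalIntegral.integral_const, smul_eq_mul, sub_zero]
  have s1 : ε' * k * ∫ s in (0:ℝ)..L, a / ((s - s₀)^2 + a^2) ≤ ε / 2 := by
    calc _ ≤ ε' * k * Real.pi := by gcongr
      _ = ε / 2 := by rw [hε']; field_simp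
  have s2 : L * (B * 8 * ‖v‖ / c^2) ≤ ε / 2 := by
    rw [lt_div_iff₀ (by positivity)] at hv2
    rw [← mul_div_assoc, div_le_iff₀ (by positivity)]
    nlinarith [mul_nonneg hL.le (norm_nonneg v)]
  linarith

lemma slit1 {m : ℝ} (hm0 : 0 < m) (hm1 : m ≤ 1) {q σ : ℂ} {x : ℝ} (hσ0 : σ ≠ 0)
    (hσ : m * ‖σ‖ ≤ σ.im) (hq : ‖q - x‖ ≤ m / 6 * |x|) :
    Complex.I * (q - σ) ∈ Complex.slitPlane := by
  rw [Complex.mem_slitPlane_iff]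
  by_cases him : (Complex.I * (q - σ)).im = 0
  · left
    simp at him ⊢
    have h1 : |q.re - x| ≤ ‖q - x‖ := by simpa using Complex.abs_re_le_norm (q - x)
    have h2 : |q.im| ≤ ‖q - x‖ := by simpa using Complex.abs_im_le_norm (q - x)
    have h3 := Complex.abs_re_le_norm σ
    have h4 : 0 < ‖σ‖ := norm_pos_iff.2 hσ0
    have h5 : q.re = σ.re := by linarith
    have h6 : |x| ≤ |q.re - x| + |q.re| := by
      have := abs_sub (q.re) (q.re - x); simp at this; linarith
    have h7 := le_abs_self q.im
    rw [h5] at h6 h1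
    have h8 : |x| ≤ 2 * ‖σ‖ := by
      have := mul_le_mul_of_nonneg_right hm1 (abs_nonneg x)
      linarith
    have h9 := mul_le_mul_of_nonneg_left h8 hm0.le
    have h10 := mul_pos hm0 h4
    linarith
  · right; exact him

lemma slit2 {m : ℝ} (hm0 : 0 < m) (hm1 : m ≤ 1) {q σ : ℂ} {x : ℝ} (hσ0 : σ ≠ 0)
    (hσ : m * ‖σ‖ ≤ σ.im) (hq : ‖q - x‖ ≤ m / 6 * |x|) :
    -(Complex.I * (q + σ)) ∈ Complex.slitPlane := by
  have := slit1 hm0 hm1 (q := -q) (σ := σ) (x := -x) hσ0 hσ (by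
    rw [abs_neg]; refine le_trans (le_of_eq ?_) hq
    rw [← norm_neg]; congr 1; push_cast; ring)
  convert this using 1
  ring

lemma T_pos {q₁ q₂ : ℂ} (h1 : 0 < q₁.re) (h2 : q₂.re < 0) :
    0 < (Complex.log (Complex.I * q₁) - Complex.log (Complex.I * q₂)
      - (Complex.log (-(Complex.I * q₁)) - Complex.log (-(Complex.I * q₂)))).im := by
  simp only [Complex.sub_im, Complex.log_im]
  have a1 : 0 ≤ (Complex.I * q₁).arg := Complex.arg_nonneg_iff.2 (by simpa using h1.le)
  have a2 : (Complex.I * q₂).arg < 0 := Complex.arg_neg_iff.2 (by simpa using h2)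
  have a3 : (-(Complex.I * q₁)).arg < 0 := Complex.arg_neg_iff.2 (by simpa using h1)
  have a4 : 0 ≤ (-(Complex.I * q₂)).arg := Complex.arg_nonneg_iff.2 (by simpa using h2.le)
  linarith

lemma NV_one {γ : ℝ → ℂ} {L s₀ : ℝ} {u : ℂ} (hγ : LipschitzWith 1 γ) (hcl : γ 0 = γ L)
    (hinj : InjOn γ (Ico 0 L)) (hs₀ : s₀ ∈ Ioo 0 L) (hd : HasDerivAt γ u s₀)
    (hu : u ≠ 0) {m : ℝ} (hm0 : 0 < m) (hm1 : m ≤ 1) :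
    ∀ᶠ v in 𝓝 (0:ℂ), v ≠ 0 → m * ‖v / u‖ ≤ (v / u).im →
      cauchyI γ L (fun _ => 1) (γ s₀ + v) ≠ cauchyI γ L (fun _ => 1) (γ s₀ - v) := by
  have hL : 0 < L := hs₀.1.trans hs₀.2
  obtain ⟨η, hη0, hin, hloc⟩ := local_setup hs₀ hd hu (κ := m / 6) (by positivity)
  obtain ⟨c, hc0, hc⟩ := far_bound hγ.continuous hcl hinj hs₀ hη0
  set q : ℝ → ℂ := fun s => (γ s - γ s₀) / u with hq
  set p₁ := s₀ - η with hp₁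
  set p₂ := s₀ + η with hp₂
  have hle : p₁ ≤ p₂ := by linarith
  have i1 : p₁ ∈ Ioo 0 L := hin p₁ (by rw [hp₁]; simp [abs_of_pos hη0])
  have i2 : p₂ ∈ Ioo 0 L := hin p₂ (by rw [hp₂]; simp [abs_of_pos hη0])
  have hr1 : (q p₁).re < 0 := by
    have h1 := hloc p₁ (by rw [hp₁]; simp [abs_of_pos hη0])
    have h2 := (Complex.abs_re_le_norm _).trans h1
    have e : p₁ - s₀ = -η := by rw [hp₁]; ring
    rw [e, abs_neg, abs_of_pos hη0, Complex.sub_re, Complex.ofReal_re] at h2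
    have := (abs_le.1 h2).2
    change (q p₁).re - -η ≤ _ at this
    nlinarith
  have hr2 : 0 < (q p₂).re := by
    have h1 := hloc p₂ (by rw [hp₂]; simp [abs_of_pos hη0])
    have h2 := (Complex.abs_re_le_norm _).trans h1
    have e : p₂ - s₀ = η := by rw [hp₂]; ring
    rw [e, abs_of_pos hη0, Complex.sub_re, Complex.ofReal_re] at h2
    have := (abs_le.1 h2).1
    change _ ≤ (q p₂).re - η at this
    nlinarith
  set T : ℂ → ℂ := fun v => Complex.log (Complex.I * (q p₂ - v / u)) - Complex.log (Complex.I * (q p₁ - v / u))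
      - (Complex.log (-(Complex.I * (q p₂ + v / u))) - Complex.log (-(Complex.I * (q p₁ + v / u)))) with hT
  have hT0 : 0 < (T 0).im := by
    have := T_pos hr2 hr1
    simpa [hT] using this
  have hTc : ContinuousAt T 0 := by
    refine ContinuousAt.sub (ContinuousAt.sub ?_ ?_) (ContinuousAt.sub ?_ ?_) <;>
    · refine ContinuousAt.clog (by fun_prop) ?_
      rw [Complex.mem_slitPlane_iff]
      right
      simp
      first | exact hr1.ne | exact hr2.ne'
  set t := (T 0).im with ht
  have hev : ∀ᶠ v in 𝓝 (0:ℂ), t / 2 < (T v).im := by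
    have := (Complex.continuous_im.continuousAt.comp hTc)
    exact this.eventually (lt_mem_nhds (by change t / 2 < t; linarith))
  have hr : 0 < min (c / 2) (t * c^2 / (32 * L)) := lt_min (by linarith) (by positivity)
  filter_upwards [Metric.ball_mem_nhds (0:ℂ) hr, hev] with v hv hTv hv0 hσ heq
  rw [mem_ball_zero_iff, lt_min_iff] at hv
  obtain ⟨hv1, hv2⟩ := hv
  have hσ0 : v / u ≠ 0 := div_ne_zero hv0 hu
  have hσ' : m * ‖v / u‖ ≤ |(v / u).im| := hσ.trans (le_abs_self _)
  obtain ⟨hJ1, hJ2⟩ := not_mem_J hm0 hm1 hu hloc hc0 hc hσ' hv1.le hv0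
  have hsub := cauchyI_sub hγ hL.le (h := fun _ => 1) continuousOn_const hJ1 hJ2
  rw [heq, sub_self] at hsub
  set K : ℝ → ℂ := fun s => (1:ℂ) * (2 * v / ((γ s - (γ s₀ + v)) * (γ s - (γ s₀ - v)))) * deriv γ s with hK
  have hne1 : ∀ s ∈ Icc 0 L, γ s - (γ s₀ + v) ≠ 0 := fun s hs h0 => hJ1 ⟨s, hs, sub_eq_zero.1 h0⟩
  have hne2 : ∀ s ∈ Icc 0 L, γ s - (γ s₀ - v) ≠ 0 := fun s hs h0 => hJ2 ⟨s, hs, sub_eq_zero.1 h0⟩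
  have hKi : IntervalIntegrable K volume 0 L := by
    refine lip_mul_intervalIntegrable (g := fun s => (1:ℂ) * (2 * v / ((γ s - (γ s₀ + v)) * (γ s - (γ s₀ - v))))) hγ ?_
    rw [uIcc_of_le hL.le]
    refine continuousOn_const.mul (continuousOn_const.div ?_ ?_)
    · have := hγ.continuous
      fun_prop
    · exact fun s hs => mul_ne_zero (hne1 s hs) (hne2 s hs)
  have hsubI : ∀ x ∈ Icc 0 L, ∀ y ∈ Icc 0 L, IntervalIntegrable K volume x y := fun x hx y hy =>
    hKi.mono_set (by rw [uIcc_of_le hL.le]; exact uIcc_subset_Icc hx hy)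
  have m0 : (0:ℝ) ∈ Icc 0 L := left_mem_Icc.2 hL.le
  have mL : L ∈ Icc 0 L := right_mem_Icc.2 hL.le
  have m1 := Ioo_subset_Icc_self i1
  have m2 := Ioo_subset_Icc_self i2
  rw [← intervalIntegral.integral_add_adjacent_intervals (hsubI 0 m0 p₁ m1) (hsubI p₁ m1 L mL),
    ← intervalIntegral.integral_add_adjacent_intervals (hsubI p₁ m1 p₂ m2) (hsubI p₂ m2 L mL)] at hsub
  have hfar : ∀ s ∈ Icc 0 L, η ≤ |s - s₀| → ‖K s‖ ≤ 8 * ‖v‖ / c^2 := by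
    intro s hs hx
    obtain ⟨n1, n2⟩ := far_bd (hc s hs hx) hv1.le
    have hd1 := lip_deriv_le hγ s
    rw [hK]
    simp only [one_mul]
    rw [norm_mul, norm_div, norm_mul, norm_mul, Complex.norm_ofNat]
    calc _ ≤ (2 * ‖v‖ / ((c/2) * (c/2))) * 1 := by gcongr
      _ = 8 * ‖v‖ / c^2 := by field_simp; ring
  have hv3 : 8 * ‖v‖ / c^2 * L < t / 4 := by
    rw [lt_div_iff₀ (by positivity)] at hv2
    rw [div_mul_eq_mul_div, div_lt_iff₀ (by positivity)]
    linarith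
  have hvn : 0 ≤ 8 * ‖v‖ / c^2 := by positivity
  have f1 : ‖∫ s in (0:ℝ)..p₁, K s‖ < t / 4 := by
    refine lt_of_le_of_lt (intervalIntegral.norm_integral_le_of_norm_le_const (C := 8 * ‖v‖ / c^2) fun s hs => ?_) (lt_of_le_of_lt ?_ hv3)
    · rw [uIoc_of_le i1.1.le] at hs
      refine hfar s ⟨hs.1.le, hs.2.trans m1.2⟩ ?_
      rw [abs_sub_comm]; refine le_trans ?_ (le_abs_self _)
      have := hs.2; linarith
    · rw [sub_zero, abs_of_pos i1.1]; gcongr; exact m1.2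
  have f2 : ‖∫ s in p₂..L, K s‖ < t / 4 := by
    refine lt_of_le_of_lt (intervalIntegral.norm_integral_le_of_norm_le_const (C := 8 * ‖v‖ / c^2) fun s hs => ?_) (lt_of_le_of_lt ?_ hv3)
    · rw [uIoc_of_le i2.2.le] at hs
      refine hfar s ⟨m2.1.trans hs.1.le, hs.2⟩ ?_
      refine le_trans ?_ (le_abs_self _)
      have := hs.1; linarith
    · rw [abs_of_pos (by linarith [i2.2])]; gcongr; linarith [m2.1]
  have hsubset : Icc p₁ p₂ ⊆ Icc 0 L := Icc_subset_Icc m1.1 m2.2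
  have hnear : ∀ s ∈ Icc p₁ p₂, |s - s₀| ≤ η := fun s hs => by
    rw [abs_le]; constructor <;> [have := hs.1; have := hs.2] <;> linarith
  have A1 := lip_chain_ftc hγ hle (fun w => Complex.log (Complex.I * ((w - γ s₀) / u - v / u)))
    (fun w => 1 / (w - (γ s₀ + v))) (fun s hs => by
      have hsl := slit1 hm0 hm1 hσ0 hσ (hloc s (hnear s hs))
      have := ((((((hasDerivAt_id (γ s)).sub_const (γ s₀)).div_const u).sub_const (v / u)).const_mul
        Complex.I)).clog hsl
      refine this.congr_deriv ?_
      have e1 := hne1 s (hsubset hs)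
      have e2 : γ s - γ s₀ - v ≠ 0 := by rwa [sub_sub]
      simp only [id]
      rw [← sub_div, ← sub_sub]
      have := Complex.I_ne_zero
      field_simp) (continuousOn_const.div ((hγ.continuous.sub continuous_const).continuousOn)
        fun s hs => hne1 s (hsubset hs))
  have A2 := lip_chain_ftc hγ hle (fun w => Complex.log (-(Complex.I * ((w - γ s₀) / u + v / u))))
    (fun w => 1 / (w - (γ s₀ - v))) (fun s hs => by
      have hsl := slit2 hm0 hm1 hσ0 hσ (hloc s (hnear s hs))
      have := ((((((hasDerivAt_id (γ s)).sub_const (γ s₀)).div_const u).add_const (v / u)).const_mul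
        Complex.I)).neg.clog hsl
      refine this.congr_deriv ?_
      have e1 := hne2 s (hsubset hs)
      have e2 : γ s - γ s₀ + v ≠ 0 := by rwa [sub_add]
      simp only [id, Pi.neg_apply]
      rw [← add_div, ← sub_add]
      have := Complex.I_ne_zero
      field_simp) (continuousOn_const.div ((hγ.continuous.sub continuous_const).continuousOn)
        fun s hs => hne2 s (hsubset hs))
  have hmid : ∫ s in p₁..p₂, K s = T v := by
    have ii1 : IntervalIntegrable (fun s => 1 / (γ s - (γ s₀ + v)) * deriv γ s) volume p₁ p₂ := by
      refine lip_mul_intervalIntegrable (g := fun s => 1 / (γ s - (γ s₀ + v))) hγ ?_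
      rw [uIcc_of_le hle]
      exact (continuousOn_const.div ((hγ.continuous.sub continuous_const).continuousOn)
        fun s hs => hne1 s (hsubset hs))
    have ii2 : IntervalIntegrable (fun s => 1 / (γ s - (γ s₀ - v)) * deriv γ s) volume p₁ p₂ := by
      refine lip_mul_intervalIntegrable (g := fun s => 1 / (γ s - (γ s₀ - v))) hγ ?_
      rw [uIcc_of_le hle]
      exact (continuousOn_const.div ((hγ.continuous.sub continuous_const).continuousOn)
        fun s hs => hne2 s (hsubset hs))
    rw [hT]
    simp only [hq]
    rw [← A1, ← A2, ← intervalIntegral.integral_sub ii1 ii2]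
    refine intervalIntegral.integral_congr fun s hs => ?_
    rw [uIcc_of_le hle] at hs
    have e1 := hne1 s (hsubset hs)
    have e2 := hne2 s (hsubset hs)
    simp only [hK]
    field_simp
    ring
  rw [hmid] at hsub
  have him := congrArg Complex.im hsub
  simp only [Complex.zero_im, Complex.add_im] at him
  have g1 := (abs_le.1 ((Complex.abs_im_le_norm _).trans f1.le)).1
  have g2 := (abs_le.1 ((Complex.abs_im_le_norm _).trans f2.le)).1
  linarith

lemma NV {γ : ℝ → ℂ} {L s₀ : ℝ} {u : ℂ} (hγ : LipschitzWith 1 γ) (hcl : γ 0 = γ L)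
    (hinj : InjOn γ (Ico 0 L)) (hs₀ : s₀ ∈ Ioo 0 L) (hd : HasDerivAt γ u s₀)
    (hu : u ≠ 0) {m : ℝ} (hm0 : 0 < m) (hm1 : m ≤ 1) :
    ∀ᶠ v in 𝓝 (0:ℂ), v ≠ 0 → m * ‖v / u‖ ≤ |(v / u).im| →
      cauchyI γ L (fun _ => 1) (γ s₀ + v) ≠ cauchyI γ L (fun _ => 1) (γ s₀ - v) := by
  have h1 := NV_one hγ hcl hinj hs₀ hd hu hm0 hm1
  have h2 : ∀ᶠ v in 𝓝 (0:ℂ), -v ≠ 0 → m * ‖-v / u‖ ≤ (-v / u).im →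
      cauchyI γ L (fun _ => 1) (γ s₀ + -v) ≠ cauchyI γ L (fun _ => 1) (γ s₀ - -v) := by
    have ht : Tendsto (fun v : ℂ => -v) (𝓝 0) (𝓝 0) := by
      simpa using (continuous_neg (G := ℂ)).tendsto 0
    exact ht.eventually h1
  filter_upwards [h1, h2] with v a1 a2 hv0 hσ
  rcases abs_cases (v / u).im with ⟨h, -⟩ | ⟨h, -⟩
  · exact a1 hv0 (by rwa [h] at hσ)
  · have := a2 (neg_ne_zero.2 hv0) (by
      rw [h] at hσ
      simpa [neg_div] using hσ)
    rw [sub_neg_eq_add, ← sub_eq_add_neg] at this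
    exact this.symm

lemma frontier_comp {J : Set ℂ} (hJ : IsClosed J) (x : ℂ) :
    frontier (connectedComponentIn Jᶜ x) ⊆ J := by
  intro y hy
  by_contra hyJ
  have hVo : IsOpen (connectedComponentIn Jᶜ x) := hJ.isOpen_compl.connectedComponentIn
  have hWo : IsOpen (connectedComponentIn Jᶜ y) := hJ.isOpen_compl.connectedComponentIn
  have hyW : y ∈ connectedComponentIn Jᶜ y := mem_connectedComponentIn hyJ
  obtain ⟨w, hw1, hw2⟩ := mem_closure_iff.1 hy.1 _ hWo hyW
  have e : connectedComponentIn Jᶜ x = connectedComponentIn Jᶜ y :=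
    (connectedComponentIn_eq hw2).trans (connectedComponentIn_eq hw1).symm
  rw [← e] at hyW
  rw [hVo.frontier_eq] at hy
  exact hy.2 hyW

lemma cauchyI_sub_const {γ : ℝ → ℂ} {L : ℝ} (hγ : LipschitzWith 1 γ) (hL : 0 ≤ L) {h : ℝ → ℂ}
    (hh : ContinuousOn h (Icc 0 L)) (k : ℂ) {z : ℂ} (hz : z ∉ γ '' Icc 0 L) :
    cauchyI γ L (fun s => h s - k) z = cauchyI γ L h z - k * cauchyI γ L (fun _ => 1) z := by
  have hu : uIcc 0 L = Icc 0 L := uIcc_of_le hL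
  have i1 : IntervalIntegrable (fun s => h s / (γ s - z) * deriv γ s) volume 0 L :=
    lip_mul_intervalIntegrable hγ (by rw [hu]; exact cont_div hγ hh hz)
  have i2 : IntervalIntegrable (fun s => (1:ℂ) / (γ s - z) * deriv γ s) volume 0 L :=
    lip_mul_intervalIntegrable hγ (by rw [hu]; exact cont_div hγ continuousOn_const hz)
  unfold cauchyI
  rw [← intervalIntegral.integral_const_mul, ← intervalIntegral.integral_sub i1 (i2.const_mul k)]
  refine intervalIntegral.integral_congr fun s _ => ?_
  ring

lemma core {γ : ℝ → ℂ} {L : ℝ} (hγ : LipschitzWith 1 γ) (hcl : γ 0 = γ L)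
    (hinj : InjOn γ (Ico 0 L)) {h : ℝ → ℂ} (hh : ContinuousOn h (Icc 0 L))
    (hmom : ∀ k : ℕ, ∫ s in (0:ℝ)..L, (γ s) ^ k * h s * deriv γ s = 0) (x : ℂ)
    (hb : Bornology.IsBounded (connectedComponentIn (γ '' Icc 0 L)ᶜ x))
    {s₀ : ℝ} {u : ℂ} (hs₀ : s₀ ∈ Ioo 0 L) (hd : HasDerivAt γ u s₀) (hu : u ≠ 0)
    {M : ℝ} (hM : 1 < M) :
    Tendsto (fun z => cauchyI γ L h z / cauchyI γ L (fun _ => 1) x)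
      (𝓝[{z ∈ connectedComponentIn (γ '' Icc 0 L)ᶜ x |
        dist z (γ s₀) < M * Metric.infDist z (γ '' Icc 0 L)}] (γ s₀)) (𝓝 (h s₀)) := by
  have hL : 0 < L := hs₀.1.trans hs₀.2
  have hu' : 0 < ‖u‖ := norm_pos_iff.2 hu
  have hJ : IsClosed (γ '' Icc 0 L) := (isCompact_Icc.image hγ.continuous).isClosed
  set U := connectedComponentIn (γ '' Icc 0 L)ᶜ x with hU
  have hUo : IsOpen U := hJ.isOpen_compl.connectedComponentIn
  have hUs : U ⊆ (γ '' Icc 0 L)ᶜ := connectedComponentIn_subset _ _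
  have hUc : IsPreconnected U := isPreconnected_connectedComponentIn
  set S := {z ∈ U | dist z (γ s₀) < M * Metric.infDist z (γ '' Icc 0 L)} with hS
  set N := cauchyI γ L (fun _ => 1) with hN
  have hζJ : γ s₀ ∈ γ '' Icc 0 L := mem_image_of_mem γ (Ioo_subset_Icc_self hs₀)
  set m : ℝ := 1 / (2 * M) with hm
  have hM0 : 0 < M := by linarith
  have hm0 : 0 < m := by positivity
  have hm1 : m ≤ 1 := by rw [hm, div_le_one (by positivity)]; linarith
  obtain ⟨η, hη0, hin, hloc⟩ := local_setup hs₀ hd hu (κ := m / 6) (by positivity)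
  obtain ⟨c, hc0, hc⟩ := far_bound hγ.continuous hcl hinj hs₀ hη0
  have hNV := NV hγ hcl hinj hs₀ hd hu hm0 hm1
  have hsh : Tendsto (fun z => z - γ s₀) (𝓝 (γ s₀)) (𝓝 0) := by
    have : Continuous (fun z : ℂ => z - γ s₀) := by fun_prop
    simpa using this.tendsto (γ s₀)
  have hr : 0 < min (c / 2) (η * ‖u‖) := lt_min (by linarith) (by positivity)
  have E : ∀ᶠ z in 𝓝[S] (γ s₀), z - γ s₀ ≠ 0 ∧ m * ‖(z - γ s₀) / u‖ ≤ |((z - γ s₀) / u).im| ∧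
      z ∉ γ '' Icc 0 L ∧ γ s₀ - (z - γ s₀) ∉ γ '' Icc 0 L ∧
      N z = N x ∧ N x ≠ 0 ∧ N (γ s₀ - (z - γ s₀)) = 0 ∧
      cauchyI γ L h (γ s₀ - (z - γ s₀)) = 0 := by
    have n1 : ∀ᶠ z in 𝓝[S] (γ s₀), z ∈ S := self_mem_nhdsWithin
    have n2 := (hsh.eventually (hNV.and (Metric.ball_mem_nhds (0:ℂ) hr))).filter_mono
      (nhdsWithin_le_nhds (s := S))
    filter_upwards [n1, n2] with z hzS hz2
    obtain ⟨hz2, hz3⟩ := hz2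
    obtain ⟨hzU, hst⟩ := hzS
    rw [dist_zero_right, lt_min_iff] at hz3
    obtain ⟨hv1, hv2⟩ := hz3
    have hzJ := hUs hzU
    set v := z - γ s₀ with hv
    have hzv : γ s₀ + v = z := by rw [hv]; ring
    have hv0 : v ≠ 0 := fun h0 => hzJ (by rw [sub_eq_zero.1 h0]; exact hζJ)
    have hcone : m * ‖v / u‖ ≤ |(v / u).im| := by
      have hre : |(v / u).re| ≤ η := by
        refine (Complex.abs_re_le_norm _).trans ?_
        rw [norm_div, div_le_iff₀ hu']; exact hv2.le
      have hs1 : |(s₀ + (v / u).re) - s₀| ≤ η := by simpa using hre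
      have hl := hloc _ hs1
      rw [add_sub_cancel_left] at hl
      refine stolz_cone hM (q := (γ (s₀ + (v / u).re) - γ s₀) / u) ?_ hl
      have hmem : γ (s₀ + (v / u).re) ∈ γ '' Icc 0 L :=
        mem_image_of_mem γ (Ioo_subset_Icc_self (hin _ hs1))
      have h1 := Metric.infDist_le_dist_of_mem (x := z) hmem
      have h2 : ‖v‖ ≤ M * ‖γ (s₀ + (v / u).re) - z‖ := by
        rw [dist_eq_norm] at hst
        refine hst.le.trans ?_
        rw [dist_comm, dist_eq_norm] at h1
        gcongr
      rw [← sub_div, norm_div, norm_div, ← mul_div_assoc]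
      gcongr
      rwa [sub_sub, hzv]
    obtain ⟨-, hJ2⟩ := not_mem_J hm0 hm1 hu hloc hc0 hc hcone hv1.le hv0
    have hne := hz2 hv0 hcone
    rw [hzv] at hne
    have hxF : x ∈ (γ '' Icc 0 L)ᶜ := connectedComponentIn_nonempty_iff.1 ⟨z, hzU⟩
    have hxU : x ∈ U := mem_connectedComponentIn hxF
    have hNz : N z = N x := winding_const hγ hL.le hcl hUo hUc hUs hzU hxU
    have hzsU : γ s₀ - v ∉ U := fun hcon =>
      hne (winding_const hγ hL.le hcl hUo hUc hUs hzU hcon)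
    have hub : ¬ Bornology.IsBounded (connectedComponentIn (γ '' Icc 0 L)ᶜ (γ s₀ - v)) := by
      intro hbb
      refine two_bounded_components hγ.continuous hL.le hcl hinj hUo
        hJ.isOpen_compl.connectedComponentIn hb hbb (frontier_comp hJ x) (frontier_comp hJ _)
        hzU (mem_connectedComponentIn hJ2) ?_ hzsU hzJ hJ2
      intro hcon
      apply hzsU
      rw [hU, connectedComponentIn_eq hzU, ← connectedComponentIn_eq hcon]
      exact mem_connectedComponentIn hJ2
    have z1 := cauchyI_unbdd hγ hL.le hh hmom hJ2 hub
    have z2 : N (γ s₀ - v) = 0 := cauchyI_unbdd hγ hL.le continuousOn_const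
      (one_moments hγ hL.le hcl) hJ2 hub
    refine ⟨hv0, hcone, hzJ, hJ2, hNz, ?_, z2, z1⟩
    rw [← hNz, ← z2]; exact hne
  by_cases hN0 : N x = 0
  · have : 𝓝[S] (γ s₀) = ⊥ := by
      rw [← empty_mem_iff_bot]
      filter_upwards [E] with z hz
      exact hz.2.2.2.2.2.1 hN0
    rw [this]
    exact tendsto_bot
  have hN0' : 0 < ‖N x‖ := norm_pos_iff.2 hN0
  rw [Metric.tendsto_nhds]
  intro ε hε
  have hD := (hsh.eventually (D_small hγ hcl hinj hs₀ hd hu (h := fun s => h s - h s₀)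
    (hh.sub continuousOn_const) (sub_self _) hm0 hm1 (ε := ε / 2 * ‖N x‖) (by positivity))).filter_mono
      (nhdsWithin_le_nhds (s := S))
  filter_upwards [E, hD] with z hz hDz
  obtain ⟨hv0, hcone, hzJ, hzsJ, e1, -, e2, e3⟩ := hz
  have hDz := hDz hv0 hcone
  have hzv : γ s₀ + (z - γ s₀) = z := by ring
  rw [hzv, cauchyI_sub_const hγ hL.le hh _ hzJ, cauchyI_sub_const hγ hL.le hh _ hzsJ, e3] at hDz
  change ‖_ - h s₀ * N z - (0 - h s₀ * N _)‖ ≤ _ at hDz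
  rw [e1, e2, mul_zero, sub_zero, sub_zero] at hDz
  have : cauchyI γ L h z / N x - h s₀ = (cauchyI γ L h z - h s₀ * N x) / N x := by
    field_simp
  rw [dist_eq_norm, this, norm_div, div_lt_iff₀ hN0']
  nlinarith

lemma good_ae {γ : ℝ → ℂ} {L : ℝ} (hγ : LipschitzWith 1 γ)
    (hd : ∀ᵐ s, s ∈ Icc 0 L → deriv γ s ≠ 0) :
    ∀ᵐ ζ ∂((Measure.hausdorffMeasure 1 : Measure ℂ).restrict (γ '' Icc 0 L)),
      ∃ s₀ ∈ Ioo 0 L, ∃ u, u ≠ 0 ∧ HasDerivAt γ u s₀ ∧ γ s₀ = ζ := by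
  have hJ : MeasurableSet (γ '' Icc 0 L) := (isCompact_Icc.image hγ.continuous).measurableSet
  rw [ae_restrict_iff' hJ]
  set G : Set ℝ := {s | s ∈ Icc 0 L → s ∈ Ioo 0 L ∧ deriv γ s ≠ 0 ∧ DifferentiableAt ℝ γ s} with hG
  have hGae : ∀ᵐ s : ℝ, s ∈ G := by
    have h0 : ∀ᵐ s : ℝ, s ≠ 0 := by simp [ae_iff]
    have h1 : ∀ᵐ s : ℝ, s ≠ L := by simp [ae_iff]
    filter_upwards [hd, h0, h1, hγ.ae_differentiableAt_real] with s a1 a2 a3 a4 hs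
    exact ⟨⟨lt_of_le_of_ne hs.1 (Ne.symm a2), lt_of_le_of_ne hs.2 a3⟩, a1 hs, a4⟩
  have hnull : (Measure.hausdorffMeasure 1 : Measure ℂ) (γ '' Gᶜ) = 0 := by
    have h1 := hγ.hausdorffMeasure_image_le (d := 1) zero_le_one Gᶜ
    rw [hausdorffMeasure_real] at h1
    have h2 : volume Gᶜ = 0 := hGae
    rw [h2, mul_zero] at h1
    exact le_antisymm h1 zero_le
  have : ∀ᵐ ζ ∂(Measure.hausdorffMeasure 1 : Measure ℂ), ζ ∉ γ '' Gᶜ :=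
    measure_eq_zero_iff_ae_notMem.1 hnull
  filter_upwards [this] with ζ hζ hζJ
  obtain ⟨s, hs, rfl⟩ := hζJ
  have hsG : s ∈ G := by
    by_contra hcon
    exact hζ (mem_image_of_mem γ hcon)
  obtain ⟨b1, b2, b3⟩ := hsG hs
  exact ⟨s, b1, deriv γ s, b2, b3.hasDerivAt, rfl⟩

/-- Proposition 6: let `δ` be a rectifiable Jordan curve with image `δ*`, `U` the Jordan domain
bounded by `δ` (the bounded connected component of `ℂ ∖ δ*`), and `f : δ* → ℂ` continuous with
`∫_δ P(z) f(z) dz = 0` for every analytic polynomial `P`. Then there exists a holomorphic `φ`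
on `U` such that for almost every `ζ ∈ δ*` w.r.t. arclength (1-dimensional Hausdorff) measure,
`φ` has nontangential limit `f ζ` at `ζ` (limit along every Stolz region). -/
theorem statement8 (δ : ℝ → ℂ) (a b : ℝ) (hδ : IsRectifiableJordanCurve δ a b)
    (U : Set ℂ) (hUbdd : Bornology.IsBounded U)
    (hUcomp : ∃ x : ℂ, U = connectedComponentIn ((δ '' Set.Icc a b)ᶜ) x)
    (f : ℂ → ℂ) (hf : ContinuousOn f (δ '' Set.Icc a b))
    (hzero : ∀ P : Polynomial ℂ, IsRSIntegral (fun z => P.eval z * f z) δ a b 0) :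
    ∃ φ : ℂ → ℂ, DifferentiableOn ℂ φ U ∧
      ∀ᵐ ζ ∂((MeasureTheory.Measure.hausdorffMeasure 1 :
          MeasureTheory.Measure ℂ).restrict (δ '' Set.Icc a b)),
        ∀ M : ℝ, 1 < M →
          Filter.Tendsto φ
            (nhdsWithin ζ {z ∈ U | dist z ζ < M * Metric.infDist z (δ '' Set.Icc a b)})
            (nhds (f ζ)) := by
  obtain ⟨hab, hc, hbv, hcl, hinj⟩ := hδ
  obtain ⟨L, γ, v, hL, hγ, hvc, hvm, hva, hvb, hγv, hcl', hinj', himg, hder⟩ :=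
    arclength_param hab hc hbv hcl hinj
  obtain ⟨x, rfl⟩ := hUcomp
  have hmom : ∀ k : ℕ, ∫ s in (0:ℝ)..L, (γ s) ^ k * f (γ s) * deriv γ s = 0 := by
    intro k
    have hg : ContinuousOn (fun z => (X ^ k : Polynomial ℂ).eval z * f z) (δ '' Icc a b) :=
      (Polynomial.continuous _).continuousOn.mul hf
    have := rs_integral hab hc hγ hvc hvm hva hvb hγv himg hg (hzero (X ^ k))
    simpa using this
  rw [← himg] at hf hUbdd ⊢
  have hJ : IsClosed (γ '' Icc 0 L) := (isCompact_Icc.image hγ.continuous).isClosed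
  have hh : ContinuousOn (fun s => f (γ s)) (Icc 0 L) :=
    hf.comp hγ.continuous.continuousOn (mapsTo_image γ _)
  refine ⟨fun z => cauchyI γ L (fun s => f (γ s)) z / cauchyI γ L (fun _ => 1) x, ?_, ?_⟩
  · intro z hz
    exact ((cauchyI_hasDerivAt hγ hL hh
      (connectedComponentIn_subset _ _ hz)).differentiableAt.div_const _).differentiableWithinAt
  · filter_upwards [good_ae hγ hder] with ζ hζ M hM
    obtain ⟨s₀, hs₀, u, hu, hd, rfl⟩ := hζ
    exact core hγ hcl' hinj' hh hmom x hUbdd hs₀ hd hu hM
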